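/- Let N ⊂ B(H) be a continuous von Neumann algebra and β a *-antiautomorphism of N of order 2. Then N (regarded as a TRO), together with the inclusion map H(N,β) ↪ N, is a universal enveloping TRO of the JC*-triple H(N,β): H(N,β) generates N as a TRO, and every triple homomorphism π from H(N,β) into a TRO S extends to a TRO homomorphism π̃ : N → S with π̃ restricting to π on H(N,β); that is, T*(H(N,β)) = N. -/

import Mathlib

open ContinuousLinearMap

noncomputable section

/-- The ternary product `x y* z` of bounded operators in `B(K,H)`. -/
def tri {K H : Type} [NormedAddCommGroup K] [InnerProductSpace ℂ K] [CompleteSpace K]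
    [NormedAddCommGroup H] [InnerProductSpace ℂ H] [CompleteSpace H]
    (x y z : K →L[ℂ] H) : K →L[ℂ] H := x ∘L (adjoint y) ∘L z

/-- The Jordan triple product `{x,y,z} = (x y* z + z y* x)/2`. -/
def jtri {K H : Type} [NormedAddCommGroup K] [InnerProductSpace ℂ K] [CompleteSpace K]
    [NormedAddCommGroup H] [InnerProductSpace ℂ H] [CompleteSpace H]
    (x y z : K →L[ℂ] H) : K →L[ℂ] H := (2 : ℂ)⁻¹ • (tri x y z + tri z y x)

/-- A TRO: a norm-closed subspace of `B(K,H)` closed under `x y* z`. -/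
def IsTRO {K H : Type} [NormedAddCommGroup K] [InnerProductSpace ℂ K] [CompleteSpace K]
    [NormedAddCommGroup H] [InnerProductSpace ℂ H] [CompleteSpace H]
    (T : Submodule ℂ (K →L[ℂ] H)) : Prop :=
  IsClosed (T : Set (K →L[ℂ] H)) ∧ ∀ x ∈ T, ∀ y ∈ T, ∀ z ∈ T, tri x y z ∈ T

variable {H : Type} [NormedAddCommGroup H] [InnerProductSpace ℂ H] [CompleteSpace H]

/-- A von Neumann algebra is continuous if it contains no nonzero abelian projection. -/
def IsContinuousVNA (N : VonNeumannAlgebra H) : Prop :=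
  ∀ q : H →L[ℂ] H, q ∈ N → IsSelfAdjoint q → q * q = q →
    (∀ x ∈ N, ∀ y ∈ N, (q * x * q) * (q * y * q) = (q * y * q) * (q * x * q)) → q = 0

/-- A von Neumann algebra `N`, regarded as a subspace of `B(H)`. -/
def vnSubmodule (N : VonNeumannAlgebra H) : Submodule ℂ (H →L[ℂ] H) :=
  Subalgebra.toSubmodule N.toStarSubalgebra.toSubalgebra

/-- The selfadjoint-type part `H(N,β) = {x ∈ N : β x = x}` of a von Neumann algebra with a
*-antiautomorphism `β` of order 2. -/
def hermPart (N : VonNeumannAlgebra H) (β : (H →L[ℂ] H) →ₗ[ℂ] (H →L[ℂ] H)) :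
    Submodule ℂ (H →L[ℂ] H) :=
  vnSubmodule N ⊓ LinearMap.eqLocus β LinearMap.id

section alg
variable {A B : Type*} [Ring A] [Algebra ℂ A] [Ring B] [Algebra ℂ B]

lemma gen_lemma (β : A →ₗ[ℂ] A) (hanti : ∀ x y, β (x * y) = β y * β x) (hsq : ∀ x, β (β x) = x)
    (e : Fin 3 → Fin 3 → A)
    (hmul : ∀ i j k, e i j * e j k = e i k)
    (hmul0 : ∀ i j k l, j ≠ k → e i j * e k l = 0)
    (hsum : ∑ i, e i i = 1) (he : ∀ i j, β (e i j) = e j i)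
    (X : Submodule ℂ A) (hX : ∀ x, β x = x → x ∈ X) (hXm : ∀ x ∈ X, ∀ y ∈ X, x * y ∈ X) (x : A) :
    x ∈ X := by
  have hd : ∀ i, e i i ∈ X := fun i => hX _ (he i i)
  have hoff : ∀ i j, i ≠ j → ∀ x, e i i * x * e j j ∈ X := by
    intro i j hij x
    have h1 : e i i * x * e j j + β (e i i * x * e j j) ∈ X := by
      apply hX; rw [map_add, hsq, add_comm]
    have h2 := hXm _ (hXm _ (hd i) _ h1) _ (hd j)
    have h3 : e i i * (e i i * x * e j j + β (e i i * x * e j j)) * e j j = e i i * x * e j j := by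
      rw [hanti, hanti, he, he, mul_add, add_mul]
      have a1 : e i i * (e i i * x * e j j) * e j j = (e i i * e i i) * x * (e j j * e j j) := by
        noncomm_ring
      have a2 : e i i * (e j j * (β x * e i i)) * e j j = (e i i * e j j) * β x * (e i i * e j j) := by
        noncomm_ring
      rw [a1, a2, hmul, hmul, hmul0 _ _ _ _ hij]; simp
    rwa [h3] at h2
  have hall : ∀ i j x, e i i * x * e j j ∈ X := by
    intro i j x
    by_cases hij : i = j
    · subst hij
      obtain ⟨k, hk⟩ : ∃ k : Fin 3, i ≠ k := ⟨i + 1, by revert i; decide⟩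
      have h1 := hXm _ (hoff i k hk (x * e i k)) _ (hoff k i hk.symm (e k i))
      have : e i i * (x * e i k) * e k k * (e k k * e k i * e i i) = e i i * x * e i i := by
        have : e i i * (x * e i k) * e k k * (e k k * e k i * e i i)
          = e i i * x * (e i k * (e k k * (e k k * (e k i * e i i)))) := by noncomm_ring
        rw [this]; simp only [hmul]
      rwa [this] at h1
    · exact hoff i j hij x
  have : x = ∑ i, ∑ j, e i i * x * e j j := by
    simp_rw [← Finset.mul_sum, ← Finset.sum_mul, hsum]; simp
  rw [this]
  exact X.sum_mem fun i _ => X.sum_mem fun j _ => hall i j x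

lemma ext_lemma (β : A →ₗ[ℂ] A) (hanti : ∀ x y, β (x * y) = β y * β x) (hsq : ∀ x, β (β x) = x)
    (e : Fin 3 → Fin 3 → A)
    (hmul : ∀ i j k, e i j * e j k = e i k)
    (hmul0 : ∀ i j k l, j ≠ k → e i j * e k l = 0)
    (hsum : ∑ i, e i i = 1) (he : ∀ i j, β (e i j) = e j i)
    (ρ : A →ₗ[ℂ] B)
    (hρ : ∀ x y, β x = x → β y = y → ρ (x * y + y * x) = ρ x * ρ y + ρ y * ρ x) :
    ∃ Φ : A →ₗ[ℂ] B, (∀ x y, Φ (x * y) = Φ x * Φ y) ∧ ∀ x, β x = x → Φ x = ρ x := by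
  have two : ∀ a b : B, (2 : ℂ) • a = (2 : ℂ) • b → a = b := fun a b h =>
    smul_right_injective B (two_ne_zero (α := ℂ)) h
  have two' : ∀ a b : B, a + a = b + b → a = b := fun a b h => by
    apply two; rw [two_smul, two_smul, h]
  -- squares
  have hsqr : ∀ x, β x = x → ρ (x * x) = ρ x * ρ x := fun x hx => by
    apply two'; rw [← map_add]; exact hρ x x hx hx
  have sJ : ∀ x y, β x = x → β y = y → β (x * y + y * x) = x * y + y * x := by
    intro x y hx hy; rw [map_add, hanti, hanti, hx, hy, add_comm]
  have hU : ∀ x y, β x = x → β y = y → ρ (x * y * x) = ρ x * ρ y * ρ x := by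
    intro x y hx hy
    apply two'
    have h1 := hρ x (x * y + y * x) hx (sJ x y hx hy)
    have hxx : β (x * x) = x * x := by rw [hanti, hx]
    have h2 := hρ (x * x) y hxx hy
    have h3 : x * y * x + x * y * x = x * (x * y + y * x) + (x * y + y * x) * x
      - (x * x * y + y * (x * x)) := by noncomm_ring
    rw [← map_add, h3, map_sub, h1, h2, hρ x y hx hy, hsqr x hx]
    noncomm_ring
  have hU2 : ∀ x y z, β x = x → β y = y → β z = z →
      ρ (x * y * z + z * y * x) = ρ x * ρ y * ρ z + ρ z * ρ y * ρ x := by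
    intro x y z hx hy hz
    have h := hU (x + z) y (by rw [map_add, hx, hz]) hy
    have h1 : (x + z) * y * (x + z) = x * y * x + (x * y * z + z * y * x) + z * y * z := by
      noncomm_ring
    rw [h1, map_add, map_add, map_add ρ x z, hU x y hx hy, hU z y hz hy] at h
    have h2 : (ρ x + ρ z) * ρ y * (ρ x + ρ z) = ρ x * ρ y * ρ x + (ρ x * ρ y * ρ z + ρ z * ρ y * ρ x) + ρ z * ρ y * ρ z := by
      noncomm_ring
    rw [h2] at h
    exact add_left_cancel (add_right_cancel h)
  -- idempotents
  have hg : ∀ i, β (e i i) = e i i := fun i => he i i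
  obtain ⟨E, hE⟩ : ∃ E : Fin 3 → B, ∀ i, ρ (e i i) = E i := ⟨_, fun _ => rfl⟩
  have hEE : ∀ i, E i * E i = E i := by
    intro i; rw [← hE, ← hsqr _ (hg i), hmul]
  -- Peirce zero
  have hP0 : ∀ k w, β w = w → e k k * w = 0 → w * e k k = 0 → E k * ρ w = 0 ∧ ρ w * E k = 0 := by
    intro k w hw h1 h2
    have h3 := hρ (e k k) w (hg k) hw
    have h4 := hU (e k k) w (hg k) hw
    rw [h1, h2, add_zero, map_zero, hE] at h3
    rw [h1, zero_mul, map_zero, hE] at h4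
    constructor
    · have h5 : E k * (E k * ρ w + ρ w * E k) = 0 := by rw [← h3, mul_zero]
      rw [mul_add, ← mul_assoc, ← mul_assoc, hEE, ← h4, add_zero] at h5; exact h5
    · have h5 : (E k * ρ w + ρ w * E k) * E k = 0 := by rw [← h3, zero_mul]
      rw [add_mul, mul_assoc (ρ w), hEE, ← h4, zero_add] at h5; exact h5
  have hE0 : ∀ i j, i ≠ j → E i * E j = 0 := by
    intro i j hij
    rw [← hE j]
    exact (hP0 i (e j j) (hg j) (hmul0 _ _ _ _ hij) (hmul0 _ _ _ _ hij.symm)).1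
  -- unit
  have h1β : β 1 = 1 := by rw [← hsum, map_sum]; simp [hg]
  have hF : ρ 1 = ∑ i, E i := by rw [← hsum, map_sum]; simp [hE]
  have hFF : (ρ 1) * (ρ 1) = ρ 1 := by rw [← hsqr _ h1β, mul_one]
  have hFx : ∀ x, β x = x → ρ 1 * ρ x = ρ x ∧ ρ x * ρ 1 = ρ x := by
    intro x hx
    have h := hρ 1 x h1β hx
    have hu := hU 1 x h1β hx
    simp only [one_mul, mul_one, map_add] at h hu
    constructor
    · rw [hu]; simp only [mul_assoc]; simp only [← mul_assoc, hFF]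
    · rw [hu]; simp only [mul_assoc]; simp only [hFF]
  -- trace map
  obtain ⟨T, hT⟩ : ∃ T : A →ₗ[ℂ] B, ∀ x, T x = ρ (x + β x) := ⟨ρ ∘ₗ (LinearMap.id + β), fun x => rfl⟩
  have sT : ∀ x, β (x + β x) = x + β x := fun x => by rw [map_add, hsq, add_comm]
  have hTF : ∀ x, T x * ∑ i, E i = T x := by
    intro x; rw [← hF, hT, (hFx _ (sT x)).2]
  have hT0 : ∀ i j k x, i ≠ k → j ≠ k → E k * T (e i i * x * e j j) = 0 ∧ T (e i i * x * e j j) * E k = 0 := by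
    intro i j k x hik hjk
    rw [hT]
    apply hP0 _ _ (sT _)
    · rw [hanti, hanti, hg, hg, mul_add]
      simp only [← mul_assoc]
      rw [hmul0 _ _ _ _ hik.symm, hmul0 _ _ _ _ hjk.symm]; simp
    · rw [hanti, hanti, hg, hg, add_mul]
      simp only [mul_assoc]
      rw [hmul0 _ _ _ _ hik, hmul0 _ _ _ _ hjk]; simp
  -- off-diagonal
  obtain ⟨φ, hφ⟩ : ∃ φ : Fin 3 → Fin 3 → A →ₗ[ℂ] B,
      ∀ i j x, φ i j x = E i * T (e i i * x * e j j) * E j := by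
    refine ⟨fun i j => (LinearMap.mulRight ℂ (E j)) ∘ₗ (LinearMap.mulLeft ℂ (E i)) ∘ₗ T ∘ₗ
      (LinearMap.mulRight ℂ (e j j)) ∘ₗ (LinearMap.mulLeft ℂ (e i i)), fun i j x => rfl⟩
  have hφE : ∀ i j x, φ i j x * E j = φ i j x := by
    intro i j x; rw [hφ, mul_assoc _ (E j), hEE]
  have hEφ : ∀ i j x, E i * φ i j x = φ i j x := by
    intro i j x; rw [hφ, ← mul_assoc, ← mul_assoc, hEE]
  have univ3 : ∀ i j k : Fin 3, i ≠ j → j ≠ k → i ≠ k → (Finset.univ : Finset (Fin 3)) = {i, j, k} := by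
    decide
  have sum3 : ∀ i j k : Fin 3, i ≠ j → j ≠ k → i ≠ k → ∀ f : Fin 3 → B, ∑ l, f l = f i + f j + f k := by
    intro i j k h1 h2 h3 f
    rw [univ3 i j k h1 h2 h3, Finset.sum_insert (by simp [h1, h3]), Finset.sum_insert (by simp [h2]),
      Finset.sum_singleton, add_assoc]
  have key : ∀ i j k, i ≠ j → j ≠ k → i ≠ k → ∀ x y, φ i j x * φ j k y = φ i k (x * e j j * y) := by
    intro i j k hij hjk hik x y
    have t1 := hT0 i j k x hik hjk
    have t2 := hT0 j k i y hij.symm hik.symm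
    have z : T (e i i * (x * e j j * y) * e k k) =
        T (e i i * x * e j j) * T (e j j * y * e k k) + T (e j j * y * e k k) * T (e i i * x * e j j) := by
      simp only [hT]
      rw [← hρ _ _ (sT _) (sT _)]
      congr 1
      simp only [hanti, hg]
      have r : ∀ a b c d f g h l : A, a * b * c * (d * f * g) = a * b * (c * d) * f * g ∧ 
         a * b * c * (d * (f * g)) = a * b * (c * d) * f * g ∧
         a * (b * c) * (d * f * g) = a * b * (c * d) * f * g ∧
         a * (b * c) * (d * (f * g)) = a * b * (c * d) * f * g := by
        intros; refine ⟨?_, ?_, ?_, ?_⟩ <;> noncomm_ring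
      simp only [mul_add, add_mul]
      simp only [(r _ _ _ _ _ _ 0 0).1, (r _ _ _ _ _ _ 0 0).2.1, (r _ _ _ _ _ _ 0 0).2.2.1, (r _ _ _ _ _ _ 0 0).2.2.2, hmul, hmul0 _ _ _ _ hij, hmul0 _ _ _ _ hij.symm, hmul0 _ _ _ _ hik, hmul0 _ _ _ _ hik.symm, hmul0 _ _ _ _ hjk, hmul0 _ _ _ _ hjk.symm, mul_zero, zero_mul, add_zero, zero_add]
      noncomm_ring
    rw [hφ i k, z]
    simp only [hφ]
    have hPF := hTF (e i i * x * e j j)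
    generalize T (e i i * x * e j j) = P at *
    generalize T (e j j * y * e k k) = Q at *
    have hP : P * Q = P * (∑ i, E i) * Q := by
      rw [hPF]
    rw [hP, sum3 i j k hij hjk hik]
    have q1 : E i * (P * (E i + E j + E k) * Q + Q * P) * E k = E i * P * (E i * Q) * E k + E i * P * E j * Q * E k + E i * (P * E k) * Q * E k + E i * Q * (P * E k) := by noncomm_ring
    rw [q1, t1.2, t2.1]
    have q2 : E i * P * E j * (E j * Q * E k) = E i * P * (E j * E j) * Q * E k := by noncomm_ring
    rw [q2, hEE]; simp
  -- matrix units
  have hεε : ∀ i k, i ≠ k → φ i k (e i k) * φ k i (e k i) = E i := by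
    intro i k hik
    have hs : β (e i k + e k i) = e i k + e k i := by rw [map_add, he, he, add_comm]
    have t1 : T (e i i * e i k * e k k) = ρ (e i k + e k i) := by
      rw [hT, hmul, hmul, he]
    have t2 : T (e k k * e k i * e i i) = ρ (e i k + e k i) := by
      rw [hT, hmul, hmul, he, add_comm]
    have h1 : ρ (e i k + e k i) * ρ (e i k + e k i) = E i + E k := by
      rw [← hsqr _ hs, ← hE, ← hE, ← map_add]
      simp only [mul_add, add_mul, hmul, hmul0 _ _ _ _ hik, hmul0 _ _ _ _ hik.symm]
      congr 1; abel
    have h2 : E i * ρ (e i k + e k i) * E i = 0 := by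
      rw [← hE, ← hU _ _ (hg i) hs]
      simp only [mul_add, add_mul, hmul, hmul0 _ _ _ _ hik, hmul0 _ _ _ _ hik.symm]
      simp
    obtain ⟨l, hl1, hl2⟩ : ∃ l : Fin 3, k ≠ l ∧ i ≠ l := by clear * - hik; revert i k; decide
    have h3 := hTF (e i i * e i k * e k k)
    have h4 := (hT0 i k l (e i k) hl2 hl1).2
    rw [sum3 i k l hik hl1 hl2] at h3
    rw [hφ, hφ, t1, t2]
    rw [t1] at h3 h4
    generalize ρ (e i k + e k i) = P at *
    rw [mul_add, h4, add_zero] at h3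
    have h5 : E i * P * E k * (E k * P * E i) = E i * P * (E k * E k) * P * E i := by noncomm_ring
    have h6 : E i * P * E k = E i * P := by
      conv_rhs => rw [← h3]
      rw [mul_add, mul_add, ← mul_assoc, ← mul_assoc, h2, zero_add]
    rw [h5, hEE, h6, mul_assoc (E i), h1, mul_add, hE0 i k hik, add_zero, hEE, hEE]
  have hkk : ∀ i k l, i ≠ k → k ≠ l → i ≠ l → ∀ x,
      φ i k (x * e i k) * φ k i (e k i) = φ i l (x * e i l) * φ l i (e l i) := by
    intro i k l hik hkl hil x
    have h1 := key i l k hil hkl.symm hik (x * e i l) (e l k)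
    have h2 := key l k i hkl.symm hik.symm hil.symm (e l k) (e k i)
    rw [mul_assoc, hmul, mul_assoc, hmul] at h1
    rw [hmul, hmul] at h2
    rw [← h1, mul_assoc, h2]
  -- a diagonal choice
  obtain ⟨ψ, hψ⟩ : ∃ ψ : Fin 3 → A →ₗ[ℂ] B, ∀ i x, ψ i x = φ i (i+1) (x * e i (i+1)) * φ (i+1) i (e (i+1) i) :=
    ⟨fun i => (LinearMap.mulRight ℂ (φ (i+1) i (e (i+1) i))) ∘ₗ φ i (i+1) ∘ₗ
      (LinearMap.mulRight ℂ (e i (i+1))), fun i x => rfl⟩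
  have hψ' : ∀ i k, i ≠ k → ∀ x, ψ i x = φ i k (x * e i k) * φ k i (e k i) := by
    intro i k hik x
    rw [hψ]
    by_cases h : i + 1 = k
    · rw [h]
    · exact hkk i (i+1) k (by clear * - i; revert i; decide) h hik x
  obtain ⟨Ψ, hΨd, hΨo⟩ : ∃ Ψ : Fin 3 → Fin 3 → A →ₗ[ℂ] B, (∀ i x, Ψ i i x = ψ i x) ∧
      ∀ i j, i ≠ j → ∀ x, Ψ i j x = φ i j x :=
    ⟨fun i j => if i = j then ψ i else φ i j, fun i x => by simp, fun i j h x => by simp [h]⟩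
  have third : ∀ i j : Fin 3, i ≠ j → ∃ l : Fin 3, j ≠ l ∧ i ≠ l := by decide
  have hφg : ∀ i j x, φ i j (e i i * x) = φ i j x := by
    intro i j x; rw [hφ, hφ, ← mul_assoc, hmul]
  have hφg' : ∀ i j x, φ i j (x * e j j) = φ i j x := by
    intro i j x; rw [hφ, hφ, mul_assoc (e i i), mul_assoc x, hmul, ← mul_assoc]
  have c1 : ∀ i j, i ≠ j → ∀ x y, φ i j x * φ j i y = ψ i (x * e j j * y) := by
    intro i j hij x y
    obtain ⟨l, hjl, hil⟩ := third i j hij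
    have k1 := key i j l hij hjl hil x (y * e i l)
    have k2 := key j i l hij.symm hil hjl y (e i l)
    rw [mul_assoc, hmul] at k2
    rw [hψ' i l hil, mul_assoc (x * e j j), ← k1, ← k2, mul_assoc, mul_assoc, hεε i l hil, hφE]
  have c2 : ∀ i k, i ≠ k → ∀ x y, ψ i x * φ i k y = φ i k (x * e i i * y) := by
    intro i k hik x y
    obtain ⟨l, hkl, hil⟩ := third i k hik
    have k1 := key l i k hil.symm hik hkl.symm (e l i) y
    have k2 := key i l k hil hkl.symm hik (x * e i l) (e l i * y)
    rw [hmul] at k1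
    have : x * e i l * e l l * (e l i * y) = x * (e i l * (e l l * e l i)) * y := by noncomm_ring
    rw [this, hmul, hmul] at k2
    rw [hψ' i l hil, mul_assoc, k1, k2]
  have c3 : ∀ i j, i ≠ j → ∀ x y, φ i j x * ψ j y = φ i j (x * e j j * y) := by
    intro i j hij x y
    obtain ⟨l, hjl, hil⟩ := third i j hij
    have k1 := key i j l hij hjl hil x (y * e j l)
    have k2 := key i l j hil hjl.symm hij (x * e j j * (y * e j l)) (e l j)
    have : x * e j j * (y * e j l) * e l l * e l j = x * e j j * y * (e j l * (e l l * e l j)) := by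
      noncomm_ring
    rw [this, hmul, hmul, hφg'] at k2
    rw [hψ' j l hjl, ← mul_assoc, k1, k2]
  have c4 : ∀ i x y, ψ i x * ψ i y = ψ i (x * e i i * y) := by
    intro i x y
    obtain ⟨k, hik⟩ : ∃ k : Fin 3, i ≠ k := ⟨i + 1, by revert i; decide⟩
    have k1 := c3 k i hik.symm (e k i) y
    rw [hmul] at k1
    rw [hψ' i k hik x, mul_assoc, k1, c1 i k hik]
    have : x * e i k * e k k * (e k i * y) = x * (e i k * (e k k * e k i)) * y := by noncomm_ring
    rw [this, hmul, hmul]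
  have hmulΨ : ∀ i j k x y, Ψ i j x * Ψ j k y = Ψ i k (x * e j j * y) := by
    intro i j k x y
    by_cases hij : i = j
    · subst hij
      by_cases hik : i = k
      · subst hik
        rw [hΨd, hΨd, hΨd, c4]
      · rw [hΨd, hΨo i k hik, hΨo i k hik, c2 i k hik]
    · by_cases hjk : j = k
      · subst hjk
        rw [hΨo i j hij, hΨo i j hij, hΨd, c3 i j hij]
      · by_cases hik : i = k
        · subst hik
          rw [hΨd, hΨo i j hij, hΨo j i hjk, c1 i j hij]
        · rw [hΨo i j hij, hΨo j k hjk, hΨo i k hik, key i j k hij hjk hik]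
  have hEΨ : ∀ i j x, E i * Ψ i j x = Ψ i j x := by
    intro i j x
    by_cases hij : i = j
    · subst hij; rw [hΨd, hψ, ← mul_assoc, hEφ]
    · rw [hΨo i j hij, hEφ]
  have hΨE : ∀ i j x, Ψ i j x * E j = Ψ i j x := by
    intro i j x
    by_cases hij : i = j
    · subst hij; rw [hΨd, hψ, mul_assoc, hφE]
    · rw [hΨo i j hij, hφE]
  have hΨ0 : ∀ i j k l x y, j ≠ k → Ψ i j x * Ψ k l y = 0 := by
    intro i j k l x y hjk
    rw [← hΨE i j, ← hEΨ k l, mul_assoc, ← mul_assoc (E j), hE0 j k hjk]; simp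
  refine ⟨∑ i, ∑ j, Ψ i j, ?_, ?_⟩
  · intro x y
    simp only [LinearMap.sum_apply]
    have h1 : ∀ i l, Ψ i l (x * y) = ∑ j, Ψ i j x * Ψ j l y := by
      intro i l
      simp_rw [hmulΨ]
      rw [← map_sum, ← Finset.sum_mul, ← Finset.mul_sum, hsum, mul_one]
    simp_rw [h1, Finset.sum_mul]
    refine Finset.sum_congr rfl fun i _ => ?_
    rw [Finset.sum_comm]
    refine Finset.sum_congr rfl fun j _ => ?_
    have h2 : Ψ i j x * (∑ k, ∑ d, Ψ k d y) = Ψ i j x * ∑ d, Ψ j d y := by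
      rw [Finset.mul_sum]
      refine Finset.sum_eq_single j (fun k _ hk => ?_) (by simp)
      rw [Finset.mul_sum]
      exact Finset.sum_eq_zero fun l _ => hΨ0 _ _ _ _ _ _ hk.symm
    rw [h2, Finset.mul_sum]
  · intro x hx
    simp only [LinearMap.sum_apply]
    have h1 : ρ x = ∑ i, ∑ j, E i * ρ x * E j := by
      simp_rw [← Finset.mul_sum, ← Finset.sum_mul, ← hF]
      rw [(hFx x hx).1, (hFx x hx).2]
    rw [h1]
    refine Finset.sum_congr rfl fun i _ => Finset.sum_congr rfl fun j _ => ?_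
    by_cases hij : i = j
    · subst hij
      obtain ⟨k, hik⟩ : ∃ k : Fin 3, i ≠ k := ⟨i + 1, by revert i; decide⟩
      have hs : β (e i k + e k i) = e i k + e k i := by rw [map_add, he, he, add_comm]
      have hy : β (e i i * x * e i i) = e i i * x * e i i := by
        rw [hanti, hanti, hx, hg, mul_assoc]
      have hJ := hρ _ _ hy hs
      have a1 : e i i * x * e i i * (e i k + e k i) + (e i k + e k i) * (e i i * x * e i i)
          = e i i * x * e i k + e k i * x * e i i := by
        have : e i i * x * e i i * (e i k + e k i) + (e i k + e k i) * (e i i * x * e i i)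
          = e i i * x * (e i i * e i k) + e i i * x * (e i i * e k i) + (e i k * e i i) * x * e i i
            + (e k i * e i i) * x * e i i := by noncomm_ring
        rw [this, hmul, hmul, hmul0 _ _ _ _ hik, hmul0 _ _ _ _ hik.symm]; simp
      have a2 : T (e i i * (x * e i k) * e k k) = ρ (e i i * x * e i k + e k i * x * e i i) := by
        rw [hT]
        congr 2
        · rw [mul_assoc, mul_assoc, hmul, mul_assoc]
        · simp only [hanti, he, hx]
          rw [← mul_assoc (e k k), ← mul_assoc (e k k), hmul]
      have a3 : T (e i i * e i k * e k k) = ρ (e i k + e k i) := by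
        rw [hT, hmul, hmul, he]
      have a4 := hεε i k hik
      rw [hΨd, hψ' i k hik, hφ, a2, ← a1, hJ, hU _ _ (hg i) hx, hE]
      have a5 : E i * ρ x * E i = E i * ρ x * E i * (φ i k (e i k) * φ k i (e k i)) := by
        rw [a4, mul_assoc (E i * ρ x), hEE]
      refine Eq.trans ?_ a5.symm
      rw [hφ i k (e i k), a3]
      generalize ρ (e i k + e k i) = P
      generalize φ k i (e k i) = Q
      have : E i * (E i * ρ x * E i * P + P * (E i * ρ x * E i)) * E k * Q =
        (E i * E i) * ρ x * E i * P * E k * Q + E i * P * E i * ρ x * (E i * E k) * Q := by noncomm_ring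
      rw [this, hE0 i k hik, hEE]
      have : E i * ρ x * E i * (E i * P * E k * Q) = E i * ρ x * (E i * E i) * P * E k * Q := by noncomm_ring
      rw [this, hEE]
      simp
    · rw [hΨo i j hij, hφ, hT, hanti, hanti, hx, hg, hg, ← mul_assoc (e j j), hU2 _ _ _ (hg i) hx (hg j), hE, hE]
      have : E i * (E i * ρ x * E j + E j * ρ x * E i) * E j =
        (E i * E i) * ρ x * (E j * E j) + (E i * E j) * ρ x * (E i * E j) := by noncomm_ring
      rw [this, hE0 i j hij, hEE, hEE]; simp
end alg

section vn
variable {H : Type} [NormedAddCommGroup H] [InnerProductSpace ℂ H] [CompleteSpace H]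

def IsSupP {ι : Type*} (c : ι → (H →L[ℂ] H)) (P : H →L[ℂ] H) : Prop :=
  star P = P ∧ P * P = P ∧ (∀ i, P * c i = c i) ∧ ∀ y : H →L[ℂ] H, (∀ i, y * c i = 0) → y * P = 0

lemma exists_isSupP {ι : Type*} (c : ι → (H →L[ℂ] H)) : ∃ P, IsSupP c P := by
  let U : Submodule ℂ H := (⨆ i, LinearMap.range (c i).toLinearMap).topologicalClosure
  have hle : ∀ i, LinearMap.range (c i).toLinearMap ≤ U := fun i =>
    (le_iSup (fun i => LinearMap.range (c i).toLinearMap) i).trans (Submodule.le_topologicalClosure _)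
  have : CompleteSpace U := (Submodule.isClosed_topologicalClosure _).completeSpace_coe
  refine ⟨U.starProjection, ?_, U.isIdempotentElem_starProjection, ?_, ?_⟩
  · exact isStarProjection_starProjection.isSelfAdjoint
  · intro i
    ext x
    exact Submodule.starProjection_eq_self_iff.2 (hle i ⟨x, rfl⟩)
  · intro y hy
    have h1 : U ≤ LinearMap.ker y.toLinearMap := by
      apply Submodule.topologicalClosure_minimal
      · apply iSup_le
        rintro i _ ⟨x, rfl⟩
        exact DFunLike.congr_fun (hy i) x
      · exact y.isClosed_ker
    ext x
    exact h1 (U.starProjection_apply_mem x)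

variable {ι : Type*} {c d : ι → (H →L[ℂ] H)} {P Q : H →L[ℂ] H}

lemma IsSupP.commute (h : IsSupP c P) (y : H →L[ℂ] H) (h1 : ∀ i, y * c i = c i * y)
    (h2 : ∀ i, star y * c i = c i * star y) : y * P = P * y := by
  obtain ⟨a, b, e, f⟩ := h
  have g : ∀ y : H →L[ℂ] H, (∀ i, y * c i = c i * y) → y * P = P * y * P := by
    intro y hy
    have := f ((1 - P) * y) (fun i => by rw [mul_assoc, hy, ← mul_assoc, sub_mul, e, one_mul, sub_self, zero_mul])
    rw [sub_mul, sub_mul, one_mul, sub_eq_zero] at this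
    exact this
  have g1 := g y h1
  have g2 := congrArg star (g (star y) h2)
  simp only [star_mul, star_star, a] at g2
  rw [g2, ← mul_assoc]; exact g1

lemma mem_of_comm (N : VonNeumannAlgebra H) (x : H →L[ℂ] H)
    (h : ∀ y, (∀ z ∈ N, z * y = y * z) → y * x = x * y) : x ∈ N := by
  rw [← N.commutant_commutant, VonNeumannAlgebra.mem_commutant_iff]
  intro y hy
  rw [VonNeumannAlgebra.mem_commutant_iff] at hy
  exact h y hy

lemma star_comm_of (N : VonNeumannAlgebra H) (y : H →L[ℂ] H) (h : ∀ z ∈ N, z * y = y * z) :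
    ∀ z ∈ N, z * star y = star y * z := by
  intro z hz
  have := congrArg star (h (star z) (star_mem hz))
  simpa using this.symm

lemma IsSupP.mem (N : VonNeumannAlgebra H) (h : IsSupP c P) (hc : ∀ i, c i ∈ N) : P ∈ N := by
  apply mem_of_comm
  intro y hy
  exact h.commute y (fun i => (hy _ (hc i)).symm) (fun i => (star_comm_of N y hy _ (hc i)).symm)

lemma vn_cfc_mem (N : VonNeumannAlgebra H) (a : H →L[ℂ] H) (ha : a ∈ N) (f : ℝ → ℝ) : cfc f a ∈ N := by
  apply mem_of_comm
  intro y hy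
  exact ((show Commute a y from hy a ha).cfc_real f).eq.symm

lemma smul_mem' (N : VonNeumannAlgebra H) (r : ℂ) (x : H →L[ℂ] H) (h : x ∈ N) : r • x ∈ N :=
  N.toStarSubalgebra.smul_mem h r

/-- `β` restricts to a *-antiautomorphism of order two of `N`. -/
structure IsBeta (N : VonNeumannAlgebra H) (β : (H →L[ℂ] H) →ₗ[ℂ] (H →L[ℂ] H)) : Prop where
  mem : ∀ x ∈ N, β x ∈ N
  anti : ∀ x ∈ N, ∀ y ∈ N, β (x * y) = β y * β x
  st : ∀ x ∈ N, β (star x) = star (β x)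
  sq : ∀ x ∈ N, β (β x) = x

section beta
variable {N : VonNeumannAlgebra H} {β : (H →L[ℂ] H) →ₗ[ℂ] (H →L[ℂ] H)}

lemma beta_one (hb : IsBeta N β) : β 1 = 1 := by
  have h := hb.anti _ (hb.mem 1 (one_mem N)) 1 (one_mem N)
  rw [mul_one, hb.sq 1 (one_mem N), mul_one] at h
  exact h.symm

lemma IsSupP.beta (hb : IsBeta N β) (hP : IsSupP c P) (hQ : IsSupP d Q) (hc : ∀ i, c i ∈ N) (hcs : ∀ i, star (c i) = c i)
    (hd : ∀ i, β (c i) = d i) : β P = Q := by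
  have hcP : ∀ i, c i * P = c i := fun i => by
    have := congrArg star (hP.2.2.1 i); simpa [hcs, hP.1] using this
  have hds : ∀ i, star (d i) = d i := fun i => by rw [← hd, ← hb.st _ (hc i), hcs]
  have hdQ : ∀ i, d i * Q = d i := fun i => by
    have := congrArg star (hQ.2.2.1 i); simpa [hds, hQ.1] using this
  have hdN : ∀ i, d i ∈ N := fun i => hd i ▸ hb.mem _ (hc i)
  have hPN := hP.mem N hc
  have hQN := hQ.mem N hdN
  have h1 : (1 - β P) * Q = 0 := hQ.2.2.2 _ fun i => by
    rw [sub_mul, one_mul, ← hd, ← hb.anti _ (hc i) _ hPN, hcP, sub_self]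
  have h2 : (1 - β Q) * P = 0 := hP.2.2.2 _ fun i => by
    have : β (d i) = c i := by rw [← hd, hb.sq _ (hc i)]
    rw [sub_mul, one_mul, ← this, ← hb.anti _ (hdN i) _ hQN, hdQ, sub_self]
  rw [sub_mul, one_mul, sub_eq_zero] at h1 h2
  have h3 := congrArg β h2
  rw [hb.anti _ (hb.mem _ hQN) _ hPN, hb.sq _ hQN] at h3
  rw [h3, ← h1]

lemma beta_nonneg (hb : IsBeta N β) (a : H →L[ℂ] H) (ha : a ∈ N) (h0 : 0 ≤ a) : 0 ≤ β a := by
  have h1 : cfc Real.sqrt a * cfc Real.sqrt a = a := by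
    rw [← cfc_mul ..]
    conv_rhs => rw [← cfc_id' ℝ a]
    refine cfc_congr fun x hx => ?_
    exact Real.mul_self_sqrt (spectrum_nonneg_of_nonneg h0 hx)
  have h2 : star (cfc Real.sqrt a) = cfc Real.sqrt a := cfc_predicate (R := ℝ) _ a
  have hm := vn_cfc_mem N a ha Real.sqrt
  generalize cfc Real.sqrt a = b at *
  rw [← h1, hb.anti _ hm _ hm]
  nth_rewrite 1 [← h2]
  rw [hb.st _ hm]
  exact star_mul_self_nonneg _

lemma beta_posPart (hb : IsBeta N β) (k : H →L[ℂ] H) (hk : k ∈ N) (hs : IsSelfAdjoint k) :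
    β (k⁺) = (β k)⁺ ∧ k⁺ ∈ N ∧ k⁻ ∈ N := by
  have m1 : k⁺ ∈ N := by
    apply mem_of_comm
    intro y hy
    rw [CFC.posPart_def]
    exact ((show Commute k y from hy k hk).cfcₙ_real _).eq.symm
  have m2 : k⁻ ∈ N := by
    apply mem_of_comm
    intro y hy
    rw [CFC.negPart_def]
    exact ((show Commute k y from hy k hk).cfcₙ_real _).eq.symm
  refine ⟨?_, m1, m2⟩
  have h1 := beta_nonneg hb _ m1 (CFC.posPart_nonneg k)
  have h2 := beta_nonneg hb _ m2 (CFC.negPart_nonneg k)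
  have h3 : β k = β (k⁺) - β (k⁻) := by rw [← map_sub, CFC.posPart_sub_negPart k hs]
  have h4 : β (k⁺) * β (k⁻) = 0 := by
    rw [← hb.anti _ m2 _ m1, CFC.negPart_mul_posPart, map_zero]
  exact (CFC.posPart_negPart_unique h3 h4 h1 h2).1.symm
end beta
end vn

section vnc
variable {H : Type} [NormedAddCommGroup H] [InnerProductSpace ℂ H] [CompleteSpace H]

lemma proj_comm_of_no_nilp (N : VonNeumannAlgebra H) (e : H →L[ℂ] H)
    (hz : ∀ z ∈ N, e * z * e = z → z * z = 0 → z = 0)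
    (y : H →L[ℂ] H) (hy : y ∈ N) (hye : e * y * e = y)
    (q : H →L[ℂ] H) (hq : q ∈ N) (hqq : q * q = q) (hqe : q * e = e * q) : q * y = y * q := by
  have hq1 : (1 - q) ∈ N := sub_mem (one_mem N) hq
  have a1 : q * (1 - q) = 0 := by rw [mul_sub, hqq, mul_one, sub_self]
  have a2 : (1 - q) * q = 0 := by rw [sub_mul, hqq, one_mul, sub_self]
  have a3 : (1 - q) * e = e * (1 - q) := by rw [sub_mul, mul_sub, hqe, one_mul, mul_one]
  have h1 : q * y * (1 - q) = 0 := by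
    apply hz _ (mul_mem (mul_mem hq hy) hq1)
    · calc e * (q * y * (1 - q)) * e = (e * q) * y * ((1 - q) * e) := by simp only [mul_assoc]
        _ = q * (e * y * e) * (1 - q) := by rw [← hqe, a3]; simp only [mul_assoc]
        _ = _ := by rw [hye]
    · calc q * y * (1 - q) * (q * y * (1 - q)) = q * y * ((1 - q) * q) * y * (1 - q) := by
            simp only [mul_assoc]
        _ = 0 := by rw [a2]; simp
  have h2 : (1 - q) * y * q = 0 := by
    apply hz _ (mul_mem (mul_mem hq1 hy) hq)
    · calc e * ((1 - q) * y * q) * e = (e * (1 - q)) * y * (q * e) := by simp only [mul_assoc]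
        _ = (1 - q) * (e * y * e) * q := by rw [← a3, hqe]; simp only [mul_assoc]
        _ = _ := by rw [hye]
    · calc (1 - q) * y * q * ((1 - q) * y * q) = (1 - q) * y * (q * (1 - q)) * y * q := by
            simp only [mul_assoc]
        _ = 0 := by rw [a1]; simp
  rw [mul_sub, mul_one, sub_eq_zero] at h1
  rw [sub_mul, sub_mul, one_mul, sub_eq_zero] at h2
  rw [h1, ← h2]

lemma norm_one_le' : ‖(1 : H →L[ℂ] H)‖ ≤ 1 := ContinuousLinearMap.norm_id_le

lemma sa_comm_of_no_nilp (N : VonNeumannAlgebra H) (e : H →L[ℂ] H)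
    (hz : ∀ z ∈ N, e * z * e = z → z * z = 0 → z = 0) (hes : star e = e)
    (y : H →L[ℂ] H) (hy : y ∈ N) (hye : e * y * e = y) (n : ℕ) :
    ∀ b : H →L[ℂ] H, b ∈ N → IsSelfAdjoint b → ‖b‖ ≤ 1 → b * e = e * b →
      ‖b * y - y * b‖ ≤ 2 * ‖y‖ / 2 ^ n := by
  induction n with
  | zero =>
    intro b _ _ hb1 _
    calc ‖b * y - y * b‖ ≤ ‖b * y‖ + ‖y * b‖ := norm_sub_le _ _
      _ ≤ ‖b‖ * ‖y‖ + ‖y‖ * ‖b‖ := add_le_add (norm_mul_le _ _) (norm_mul_le _ _)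
      _ ≤ 2 * ‖y‖ / 2 ^ 0 := by nlinarith [norm_nonneg y]
  | succ n ih =>
    intro b hbN hbs hb1 hbe
    rcases subsingleton_or_nontrivial H with hH | hH
    · have : b * y - y * b = 0 := Subsingleton.elim _ _
      rw [this, norm_zero]; positivity
    set P := cfc (fun t : ℝ => max t 0) b with hP
    set M := cfc (fun t : ℝ => max (-t) 0) b with hM
    have hPN : P ∈ N := vn_cfc_mem N b hbN _
    have hPM : P - M = b := by
      rw [hP, hM, ← cfc_sub ..]
      conv_rhs => rw [← cfc_id' ℝ b]
      refine cfc_congr fun x _ => ?_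
      show max x 0 - max (-x) 0 = x
      rcases le_total x 0 with h | h <;> simp [h]
    have hMP : M * P = 0 := by
      rw [hP, hM, ← cfc_mul ..]
      rw [← cfc_zero ℝ b]
      refine cfc_congr fun x _ => ?_
      show max (-x) 0 * max x 0 = 0
      rcases le_total x 0 with h | h <;> simp [h]
    have hA : (2 : ℝ) • (P + M) - 1 = cfc (fun t : ℝ => 2 * |t| - 1) b := by
      rw [hP, hM, ← cfc_add .., ← cfc_smul .., ← cfc_one ℝ b, ← cfc_sub ..]
      refine cfc_congr fun x _ => ?_
      show 2 * (max x 0 + max (-x) 0) - 1 = 2 * |x| - 1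
      rcases le_total x 0 with h | h <;> simp [h, abs_of_nonneg, abs_of_nonpos]
    have hAn : ‖(2 : ℝ) • (P + M) - 1‖ ≤ 1 := by
      rw [hA]
      apply norm_cfc_le zero_le_one
      intro x hx
      have : ‖x‖ ≤ ‖b‖ := spectrum.norm_le_norm_of_mem hx
      rw [Real.norm_eq_abs] at this ⊢
      rw [abs_le]
      constructor <;> nlinarith [abs_nonneg x]
    have hPs : star P = P := cfc_predicate (R := ℝ) _ b
    have hMs : star M = M := cfc_predicate (R := ℝ) _ b
    obtain ⟨q, hq⟩ := exists_isSupP (fun _ : Unit => P)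
    have hqN : q ∈ N := hq.mem N fun _ => hPN
    have hPe : Commute P e := (show Commute b e from hbe).cfc_real _
    have hqe : e * q = q * e := hq.commute e (fun _ => hPe.eq.symm) (fun _ => by rw [hes]; exact hPe.eq.symm)
    have hqP : q * P = P := hq.2.2.1 ()
    have hqM : q * M = 0 := by
      have := congrArg star (hq.2.2.2 M fun _ => hMP)
      simpa [hMs, hq.1] using this
    have hqq := hq.2.1
    have hss : star ((2 : ℝ) • q - 1) = (2 : ℝ) • q - 1 := by simp [hq.1]
    have hs2 : ((2 : ℝ) • q - 1) * ((2 : ℝ) • q - 1) = 1 := by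
      simp only [sub_mul, mul_sub, smul_mul_assoc, mul_smul_comm, hqq, one_mul, mul_one]
      module
    have hsn : ‖(2 : ℝ) • q - 1‖ ≤ 1 := by
      have h := CStarRing.norm_star_mul_self (x := (2 : ℝ) • q - 1)
      rw [hss, hs2] at h
      have := norm_one_le' (H := H)
      nlinarith [norm_nonneg ((2 : ℝ) • q - 1)]
    set s := (2 : ℝ) • q - 1 with hs
    have hb' : (2 : ℝ) • b - s = s * ((2 : ℝ) • (P + M) - 1) := by
      rw [← hPM, hs]
      simp only [sub_mul, mul_sub, smul_mul_assoc, mul_smul_comm, mul_add, hqP, hqM, one_mul, mul_one]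
      module
    have hsy : s * y = y * s := by
      have := proj_comm_of_no_nilp N e hz y hy hye q hqN hqq hqe.symm
      rw [hs]; simp only [sub_mul, mul_sub, smul_mul_assoc, mul_smul_comm, this, one_mul, mul_one]
    have hsN : s ∈ N := by
      rw [hs]
      refine sub_mem ?_ (one_mem N)
      rw [two_smul]; exact add_mem hqN hqN
    have key := ih ((2 : ℝ) • b - s) (sub_mem (by rw [two_smul]; exact add_mem hbN hbN) hsN)
      (by
        show star _ = _
        rw [star_sub, hss, star_smul, hbs.star_eq]; simp)
      (by rw [hb']
          calc _ ≤ ‖s‖ * ‖(2 : ℝ) • (P + M) - 1‖ := norm_mul_le _ _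
            _ ≤ 1 * 1 := mul_le_mul hsn hAn (norm_nonneg _) zero_le_one
            _ = 1 := one_mul _)
      (by rw [hs]; simp only [sub_mul, mul_sub, smul_mul_assoc, mul_smul_comm, hqe, hbe, one_mul, mul_one])
    have e1 : ((2 : ℝ) • b - s) * y - y * ((2 : ℝ) • b - s) = (2 : ℝ) • (b * y - y * b) := by
      simp only [sub_mul, mul_sub, smul_mul_assoc, mul_smul_comm, hsy]
      module
    rw [e1, norm_smul] at key
    rw [pow_succ, ← div_div, le_div_iff₀ two_pos]
    rw [Real.norm_two] at key
    linarith

lemma comm_of_no_nilp (N : VonNeumannAlgebra H) (e : H →L[ℂ] H) (heN : e ∈ N)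
    (hes : star e = e) (hee : e * e = e)
    (hz : ∀ z ∈ N, e * z * e = z → z * z = 0 → z = 0) :
    ∀ x ∈ N, ∀ y ∈ N, (e * x * e) * (e * y * e) = (e * y * e) * (e * x * e) := by
  have h1 : ∀ y ∈ N, e * y * e = y → ∀ b ∈ N, IsSelfAdjoint b → b * e = e * b → b * y = y * b := by
    intro y hy hye b hb hbs hbe
    have h0 : ∀ b ∈ N, IsSelfAdjoint b → b * e = e * b → ‖b‖ ≤ 1 → b * y = y * b := by
      intro b hb hbs hbe hb1
      have := fun n => sa_comm_of_no_nilp N e hz hes y hy hye n b hb hbs hb1 hbe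
      have lim : Filter.Tendsto (fun n : ℕ => 2 * ‖y‖ / 2 ^ n) Filter.atTop (nhds 0) := by
        have := (tendsto_pow_atTop_nhds_zero_of_lt_one (r := (1/2:ℝ)) (by norm_num) (by norm_num)).const_mul (2 * ‖y‖)
        simpa [div_eq_mul_inv] using this
      have := ge_of_tendsto' lim this
      rw [norm_le_zero_iff, sub_eq_zero] at this
      exact this
    have h2 := h0 (((‖b‖ + 1)⁻¹ : ℝ) • b) (by
        have := smul_mem' N (((‖b‖ + 1)⁻¹ : ℝ) : ℂ) b hb
        rwa [Complex.coe_smul] at this) (by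
        show star _ = _
        rw [star_smul, hbs.star_eq]; simp)
      (by rw [smul_mul_assoc, mul_smul_comm, hbe])
      (by
        have : 0 < ‖b‖ + 1 := by positivity
        rw [norm_smul, Real.norm_of_nonneg (by positivity), inv_mul_le_iff₀ this]; linarith)
    rw [smul_mul_assoc, mul_smul_comm] at h2
    have hne : ((‖b‖ + 1)⁻¹ : ℝ) ≠ 0 := by positivity
    exact smul_right_injective _ hne h2
  intro x hx y hy
  have hX : e * x * e ∈ N := mul_mem (mul_mem heN hx) heN
  have hY : e * y * e ∈ N := mul_mem (mul_mem heN hy) heN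
  have heX : e * x * e * e = e * (e * x * e) := by
    rw [mul_assoc _ e e, hee, ← mul_assoc, ← mul_assoc, hee]
  have heY : e * (e * y * e) * e = e * y * e := by
    rw [mul_assoc, mul_assoc _ e e, hee, ← mul_assoc, ← mul_assoc, hee]
  have hXs : star (e * x * e) * e = e * star (e * x * e) := by
    have := congrArg star heX
    simpa [hes, mul_assoc] using this.symm
  generalize e * x * e = X at *
  generalize e * y * e = Y at *
  have r1 := h1 Y hY heY (X + star X) (add_mem hX (star_mem hX)) (by
    show star _ = _; rw [star_add, star_star, add_comm]) (by rw [add_mul, mul_add, heX, hXs])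
  have r2 := h1 Y hY heY (Complex.I • (X - star X)) (smul_mem' N _ _ (sub_mem hX (star_mem hX))) (by
    show star _ = _
    rw [star_smul, star_sub, star_star, Complex.star_def, Complex.conj_I, neg_smul, ← smul_neg, neg_sub]) (by
    rw [smul_mul_assoc, mul_smul_comm, sub_mul, mul_sub, heX, hXs])
  rw [smul_mul_assoc, mul_smul_comm] at r2
  have r3 := smul_right_injective _ Complex.I_ne_zero r2
  have : (2 : ℝ) • (X * Y) = (2 : ℝ) • (Y * X) := by
    have e1 : (2 : ℝ) • (X * Y) = (X + star X) * Y + (X - star X) * Y := by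
      rw [add_mul, sub_mul, two_smul]; abel
    have e2 : (2 : ℝ) • (Y * X) = Y * (X + star X) + Y * (X - star X) := by
      rw [mul_add, mul_sub, two_smul]; abel
    rw [e1, e2, r1]
    exact congrArg _ r3
  exact smul_right_injective _ (two_ne_zero) this
end vnc

section vnd
variable {H : Type} [NormedAddCommGroup H] [InnerProductSpace ℂ H] [CompleteSpace H]
variable {N : VonNeumannAlgebra H} {β : (H →L[ℂ] H) →ₗ[ℂ] (H →L[ℂ] H)}

lemma exists_skew (hN : IsContinuousVNA N) (hb : IsBeta N β) (p : H →L[ℂ] H) (hpN : p ∈ N)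
    (hps : star p = p) (hpp : p * p = p) (hβp : β p = p) (hp0 : p ≠ 0) :
    ∃ k ∈ N, star k = k ∧ β k = -k ∧ k ≠ 0 ∧ p * k = k := by
  by_contra hcon
  push Not at hcon
  apply hp0
  have key : ∀ y ∈ N, p * y = y → y * p = y → β y = y := by
    intro y hy h1 h2
    have hβy := hb.mem _ hy
    have g1 : p * (y - β y) = y - β y := by
      have := hb.anti _ hy _ hpN
      rw [h2, hβp] at this
      rw [mul_sub, h1, ← this]
    have g2 : (y - β y) * p = y - β y := by
      have := hb.anti _ hpN _ hy
      rw [h1, hβp] at this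
      rw [sub_mul, h2, ← this]
    have g2' : p * star (y - β y) = star (y - β y) := by
      have := congrArg star g2
      rwa [star_mul, hps] at this
    have g3 : β (y - β y) = -(y - β y) := by rw [map_sub, hb.sq _ hy, neg_sub]
    have gN : y - β y ∈ N := sub_mem hy hβy
    have g4 : β (star (y - β y)) = - star (y - β y) := by rw [hb.st _ gN, g3, star_neg]
    generalize hk : y - β y = k at *
    have a1 : k + star k = 0 := by
      by_contra h0
      exact hcon (k + star k) (add_mem gN (star_mem gN)) (by rw [star_add, star_star, add_comm])
        (by rw [map_add, g3, g4, neg_add]) h0 (by rw [mul_add, g1, g2'])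
    have a2 : Complex.I • (k - star k) = 0 := by
      by_contra h0
      exact hcon _ (smul_mem' N Complex.I _ (sub_mem gN (star_mem gN)))
        (by rw [star_smul, star_sub, star_star, Complex.star_def, Complex.conj_I, neg_smul, ← smul_neg, neg_sub])
        (by rw [map_smul, map_sub, g3, g4, ← smul_neg, neg_sub_neg, neg_sub]) h0
        (by rw [mul_smul_comm, mul_sub, g1, g2'])
    have a3 : k - star k = 0 := (smul_eq_zero.1 a2).resolve_left Complex.I_ne_zero
    have a4 : (2 : ℂ) • k = 0 := by
      have : (2 : ℂ) • k = (k + star k) + (k - star k) := by rw [two_smul]; abel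
      rw [this, a1, a3, add_zero]
    have a5 : k = 0 := (smul_eq_zero.1 a4).resolve_left two_ne_zero
    rw [a5, sub_eq_zero] at hk
    exact hk.symm
  apply hN p hpN hps hpp
  intro x hx y hy
  have m : ∀ x ∈ N, p * x * p ∈ N := fun x hx => mul_mem (mul_mem hpN hx) hpN
  have l : ∀ x, p * (p * x * p) = p * x * p := fun x => by rw [← mul_assoc, ← mul_assoc, hpp]
  have r : ∀ x, (p * x * p) * p = p * x * p := fun x => by rw [mul_assoc, hpp]
  have h1 := key _ (m x hx) (l x) (r x)
  have h2 := key _ (m y hy) (l y) (r y)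
  have h3 := key _ (mul_mem (m x hx) (m y hy)) (by rw [← mul_assoc, l]) (by rw [mul_assoc, r])
  rw [hb.anti _ (m x hx) _ (m y hy), h1, h2] at h3
  exact h3.symm

lemma exists_nil (hN : IsContinuousVNA N) (hb : IsBeta N β) (p : H →L[ℂ] H) (hpN : p ∈ N)
    (hps : star p = p) (hpp : p * p = p) (hβp : β p = p) (hp0 : p ≠ 0) :
    ∃ x ∈ N, β x = star x ∧ x * x = 0 ∧ x ≠ 0 ∧ p * x = x ∧ x * p = x := by
  obtain ⟨k, hkN, hks, hβk, hk0, hpk⟩ := exists_skew hN hb p hpN hps hpp hβp hp0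
  obtain ⟨b1, m1, m2⟩ := beta_posPart hb k hkN hks
  rw [hβk, CFC.posPart_neg] at b1
  have hP0 : k⁺ ≠ 0 := by
    intro h
    rw [h, map_zero] at b1
    apply hk0
    rw [← CFC.posPart_sub_negPart k hks, h, ← b1, sub_zero]
  have hPs : star (k⁺) = k⁺ := (CFC.posPart_nonneg k).isSelfAdjoint
  have hMs : star (k⁻) = k⁻ := (CFC.negPart_nonneg k).isSelfAdjoint
  have hpP : (1 - p) * k⁺ = 0 := by
    have h1 : (1 - p) * (k⁺ * k⁺) = 0 := by
      have : k⁺ * k⁺ = k * k⁺ := by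
        conv_rhs => rw [← CFC.posPart_sub_negPart k hks]
        rw [sub_mul, CFC.posPart_sub_negPart k hks, CFC.negPart_mul_posPart, sub_zero]
      rw [this, ← mul_assoc, sub_mul, one_mul, hpk, sub_self, zero_mul]
    rw [← CStarRing.mul_star_self_eq_zero_iff, star_mul, hPs, ← mul_assoc, mul_assoc (1 - p), h1, zero_mul]
  obtain ⟨e, he⟩ := exists_isSupP (fun _ : Unit => k⁺)
  obtain ⟨f, hf⟩ := exists_isSupP (fun _ : Unit => k⁻)
  have heN : e ∈ N := he.mem N fun _ => m1
  have hef : β e = f := IsSupP.beta hb he hf (fun _ => m1) (fun _ => hPs) (fun _ => b1)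
  have hfe : f * e = 0 := by
    have h1 := congrArg star (hf.2.2.2 (k⁺) fun _ => CFC.posPart_mul_negPart k)
    rw [star_mul, hf.1, hPs, star_zero] at h1
    exact he.2.2.2 f fun _ => h1
  have hef0 : e * f = 0 := by
    have := congrArg star hfe
    rwa [star_mul, hf.1, he.1, star_zero] at this
  have hpe : p * e = e := by
    have := he.2.2.2 (1 - p) fun _ => hpP
    rw [sub_mul, one_mul, sub_eq_zero] at this; exact this.symm
  have hep : e * p = e := by
    have := congrArg star hpe
    rwa [star_mul, hps, he.1] at this
  have he0 : e ≠ 0 := by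
    intro h
    have := he.2.2.1 ()
    rw [h, zero_mul] at this
    exact hP0 this.symm
  have : ∃ z ∈ N, e * z * e = z ∧ z * z = 0 ∧ z ≠ 0 := by
    by_contra hcon
    push Not at hcon
    exact he0 (hN e heN he.1 he.2.1 (comm_of_no_nilp N e heN he.1 he.2.1 hcon))
  obtain ⟨z, hzN, hez, hzz, hz0⟩ := this
  have hze : z * e = z := by rw [← hez, mul_assoc, he.2.1]
  have hez' : e * z = z := by rw [← hez, ← mul_assoc, ← mul_assoc, he.2.1]
  have hzs : star z ∈ N := star_mem hzN
  have c1 : f * β (star z) = β (star z) := by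
    rw [← hef, ← hb.anti _ hzs _ heN]
    have := congrArg star hez'
    rw [star_mul, he.1] at this; rw [this]
  have c2 : β (star z) * f = β (star z) := by
    rw [← hef, ← hb.anti _ heN _ hzs]
    have := congrArg star hze
    rw [star_mul, he.1] at this; rw [this]
  have c3 : β (star z) * β (star z) = 0 := by
    rw [← hb.anti _ hzs _ hzs, ← star_mul, hzz, star_zero, map_zero]
  have pz : p * z = z := by rw [← hez', ← mul_assoc, hpe]
  have zp : z * p = z := by rw [← hze, mul_assoc, hep]
  have c4 : p * β (star z) = β (star z) := by
    nth_rewrite 1 [← hβp]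
    rw [← hb.anti _ hzs _ hpN]
    have := congrArg star pz
    rw [star_mul, hps] at this; rw [this]
  have c5 : β (star z) * p = β (star z) := by
    nth_rewrite 1 [← hβp]
    rw [← hb.anti _ hpN _ hzs]
    have := congrArg star zp
    rw [star_mul, hps] at this; rw [this]
  have bN := hb.mem _ hzs
  have hst : star (β (star z)) = β z := by rw [← hb.st _ hzs, star_star]
  have hbb : β (β (star z)) = star z := hb.sq _ hzs
  generalize β (star z) = y at *
  have zy : z * y = 0 := by rw [← hze, ← c1, mul_assoc, ← mul_assoc e, hef0, zero_mul, mul_zero]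
  have yz : y * z = 0 := by rw [← hez', ← c2, mul_assoc, ← mul_assoc f, hfe, zero_mul, mul_zero]
  refine ⟨z + y, add_mem hzN bN, ?_, ?_, ?_, ?_, ?_⟩
  · rw [map_add, star_add, hst, hbb, add_comm]
  · simp [add_mul, mul_add, zy, yz, hzz, c3]
  · intro h
    apply hz0
    have : (z + y) * e = z := by rw [add_mul, hze, ← c2, mul_assoc, hfe, mul_zero, add_zero]
    rw [← this, h, zero_mul]
  · rw [mul_add, pz, c4]
  · rw [add_mul, zp, c5]
end vnd

section vne
variable {H : Type} [NormedAddCommGroup H] [InnerProductSpace ℂ H] [CompleteSpace H]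
variable {N : VonNeumannAlgebra H} {β : (H →L[ℂ] H) →ₗ[ℂ] (H →L[ℂ] H)}

lemma exists_invsqrt (hb : IsBeta N β) (m : H →L[ℂ] H) (hm : m ∈ N) (ε : ℝ) (hε : 0 < ε)
    (hle : algebraMap ℝ _ ε ≤ m) (hβm : β m = m) :
    ∃ h ∈ N, star h = h ∧ β h = h ∧ h * h * m = 1 ∧ ∀ y, y * m = m * y → y * h = h * y := by
  have hms : IsSelfAdjoint m := by
    have h0 : 0 ≤ algebraMap ℝ (H →L[ℂ] H) ε := algebraMap_nonneg _ hε.le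
    exact (h0.trans hle).isSelfAdjoint
  have hsp : ∀ t ∈ spectrum ℝ m, ε ≤ t := (algebraMap_le_iff_le_spectrum (a := m)).1 hle
  have hc : ContinuousOn (fun t : ℝ => (√t)⁻¹) (spectrum ℝ m) := by
    apply ContinuousOn.inv₀ (Real.continuous_sqrt.continuousOn)
    intro t ht
    exact (Real.sqrt_pos.2 (hε.trans_le (hsp t ht))).ne'
  set h := cfc (fun t : ℝ => (√t)⁻¹) m with hh
  have hN : h ∈ N := vn_cfc_mem N m hm _
  have hs : star h = h := cfc_predicate (R := ℝ) _ m
  have h0 : 0 ≤ h := cfc_nonneg fun t _ => by positivity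
  have hcomm : ∀ y, y * m = m * y → y * h = h * y := fun y hy =>
    ((show Commute m y from hy.symm).cfc_real _).eq.symm
  have h1 : h * h * m = 1 := by
    have e1 := cfc_mul (fun t : ℝ => (√t)⁻¹) (fun t : ℝ => (√t)⁻¹) m hc hc
    have e2 := cfc_mul (fun t : ℝ => (√t)⁻¹ * (√t)⁻¹) (fun t : ℝ => t) m (hc.mul hc) continuousOn_id
    rw [cfc_id' ℝ m, e1, ← hh] at e2
    rw [← e2, ← cfc_one ℝ m]
    refine cfc_congr fun t ht => ?_
    have : 0 < t := hε.trans_le (hsp t ht)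
    show (√t)⁻¹ * (√t)⁻¹ * t = 1
    rw [← mul_inv, Real.mul_self_sqrt this.le, inv_mul_cancel₀ this.ne']
  refine ⟨h, hN, hs, ?_, h1, hcomm⟩
  have h2 : m * (β h * β h) = 1 := by
    have := congrArg β h1
    rw [hb.anti _ (mul_mem hN hN) _ hm, hb.anti _ hN _ hN, hβm, beta_one hb] at this
    exact this
  have h3 : β h * β h = h * h := by
    calc β h * β h = h * h * m * (β h * β h) := by rw [h1, one_mul]
      _ = h * h := by rw [mul_assoc, h2, mul_one]
  have h4 := beta_nonneg hb h hN h0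
  rw [← CFC.sqrt_unique h3 h4, CFC.sqrt_mul_self h h0]

lemma exists_w (hN : IsContinuousVNA N) (hb : IsBeta N β) (p : H →L[ℂ] H) (hpN : p ∈ N)
    (hps : star p = p) (hpp : p * p = p) (hβp : β p = p) (hp0 : p ≠ 0) :
    ∃ w ∈ N, β w = star w ∧ w * w = 0 ∧ w ≠ 0 ∧ p * w = w ∧ w * p = w ∧
      w * star w * w = w := by
  obtain ⟨x, hxN, hβx, hxx, hx0, hpx, hxp⟩ := exists_nil hN hb p hpN hps hpp hβp hp0
  have hxs : star x ∈ N := star_mem hxN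
  obtain ⟨a, ha⟩ : ∃ a, a = star x * x := ⟨_, rfl⟩
  have haN : a ∈ N := ha ▸ mul_mem hxs hxN
  have hβa : β a = a := by rw [ha, hb.anti _ hxs _ hxN, hb.st _ hxN, hβx, star_star]
  have ha0 : a ≠ 0 := by rw [ha]; exact fun h => hx0 (CStarRing.star_mul_self_eq_zero_iff x |>.1 h)
  have has : IsSelfAdjoint a := ha ▸ IsSelfAdjoint.star_mul_self x
  obtain ⟨ε, hε⟩ : ∃ ε, ε = ‖a‖ / 2 := ⟨_, rfl⟩
  have hεp : 0 < ε := by rw [hε]; have := norm_pos_iff.2 ha0; positivity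
  obtain ⟨s, hs⟩ : ∃ s, s = algebraMap ℝ (H →L[ℂ] H) ε := ⟨_, rfl⟩
  have hs' : s = (ε : ℂ) • (1 : H →L[ℂ] H) := by
    rw [hs, Algebra.algebraMap_eq_smul_one, Complex.coe_smul]
  have hsN : s ∈ N := hs' ▸ smul_mem' N _ _ (one_mem N)
  have hss : star s = s := by rw [hs]; exact (IsSelfAdjoint.algebraMap _ (IsSelfAdjoint.all ε)).star_eq
  have hβs : β s = s := by rw [hs', map_smul, beta_one hb]
  have hsc : ∀ y, s * y = y * s := fun y => by rw [hs]; exact Algebra.commutes ε y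
  have hkN : a - s ∈ N := sub_mem haN hsN
  have hks : IsSelfAdjoint (a - s) := has.sub hss
  obtain ⟨b1, cN, -⟩ := beta_posPart hb _ hkN hks
  rw [map_sub, hβa, hβs] at b1
  have hc0 : (a - s)⁺ ≠ 0 := by
    rw [Ne, CFC.posPart_eq_zero_iff _ hks]
    intro h
    have h1 : a ≤ algebraMap ℝ _ ε := by rw [← hs]; exact sub_nonpos.1 h
    have a0 : 0 ≤ a := ha ▸ star_mul_self_nonneg x
    have := (CStarAlgebra.norm_le_iff_le_algebraMap a hεp.le a0).2 h1
    linarith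
  have hcn := CFC.posPart_nonneg (a - s)
  have hkc : (a - s) * (a - s)⁺ = (a - s)⁺ * (a - s)⁺ := by
    have := CFC.posPart_sub_negPart _ hks
    have h2 := CFC.negPart_mul_posPart (a - s)
    generalize (a - s)⁺ = c at *
    generalize (a - s)⁻ = d at *
    rw [← this, sub_mul, h2, sub_zero]
  generalize (a - s)⁺ = c at *
  have hcs : star c = c := hcn.isSelfAdjoint
  have hac : a * c = (s + c) * c := by
    rw [sub_mul, sub_eq_iff_eq_add] at hkc
    rw [hkc, add_mul, add_comm]
  have hca : c * a = c * (s + c) := by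
    have := congrArg star hac
    simpa [hcs, has.star_eq, hss] using this
  obtain ⟨h, hhN, hhs, hβh, hhm, hhc⟩ := exists_invsqrt hb (s + c) (add_mem hsN cN) ε hεp
    (by rw [← hs]; exact le_add_of_nonneg_right hcn) (by rw [map_add, hβs, b1])
  have hch : c * h = h * c := hhc c (by rw [mul_add, add_mul, hsc])
  have hmh : (s + c) * h = h * (s + c) := by rw [mul_add, add_mul, hsc, hch]
  obtain ⟨f, hf⟩ := exists_isSupP (fun _ : Unit => c)
  have hfN : f ∈ N := hf.mem N fun _ => cN
  have hβf : β f = f := IsSupP.beta hb hf hf (fun _ => cN) (fun _ => hcs) (fun _ => b1)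
  have hhf : h * f = f * h := hf.commute h (fun _ => hch.symm) (fun _ => by rw [hhs]; exact hch.symm)
  have haf : a * f = (s + c) * f := by
    have := hf.2.2.2 (a - (s + c)) fun _ => by rw [sub_mul, hac, sub_self]
    rwa [sub_mul, sub_eq_zero] at this
  have hann : ∀ y, a * y = 0 → f * y = 0 := by
    intro y hy
    have h1 : c * y = 0 := by
      have h2 : (s + c) * (c * y) = 0 := by
        have : (s + c) * c = c * (s + c) := by rw [mul_add, add_mul, hsc]
        rw [← mul_assoc, this, ← hca, mul_assoc, hy, mul_zero]
      calc c * y = h * h * (s + c) * (c * y) := by rw [hhm, one_mul]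
        _ = 0 := by rw [mul_assoc, h2, mul_zero]
    have h3 := congrArg star h1
    rw [star_mul, hcs, star_zero] at h3
    have h4 := congrArg star (hf.2.2.2 (star y) fun _ => h3)
    rwa [star_mul, star_star, hf.1, star_zero] at h4
  have hfx : f * x = 0 := hann x (by rw [ha, mul_assoc, hxx, mul_zero])
  have hfp : f * p = f := by
    have := hann (1 - p) (by rw [ha, mul_sub, mul_one, mul_assoc, hxp, sub_self])
    rw [mul_sub, mul_one, sub_eq_zero] at this; exact this.symm
  have hff := hf.2.1
  have hf0 : f ≠ 0 := by
    intro h0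
    have := hf.2.2.1 ()
    rw [h0, zero_mul] at this
    exact hc0 this.symm
  have hwst : star (x * h * f) = f * h * star x := by
    rw [star_mul, star_mul, hf.1, hhs, mul_assoc]
  have hww : star (x * h * f) * (x * h * f) = f := by
    rw [hwst]
    calc f * h * star x * (x * h * f) = f * h * (star x * x) * (h * f) := by simp only [mul_assoc]
      _ = f * h * (a * f) * h := by rw [← ha, hhf]; simp only [mul_assoc]
      _ = f * h * ((s + c) * (f * h)) := by rw [haf]; simp only [mul_assoc]
      _ = f * h * (((s + c) * h) * f) := by rw [← hhf]; simp only [mul_assoc]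
      _ = f * (h * h * (s + c)) * f := by rw [hmh]; simp only [mul_assoc]
      _ = f := by rw [hhm, mul_one, hff]
  refine ⟨x * h * f, mul_mem (mul_mem hxN hhN) hfN, ?_, ?_, ?_, ?_, ?_, ?_⟩
  · rw [hwst, hb.anti _ (mul_mem hxN hhN) _ hfN, hb.anti _ hxN _ hhN, hβx, hβf, hβh, mul_assoc]
  · calc x * h * f * (x * h * f) = x * h * (f * x) * (h * f) := by simp only [mul_assoc]
      _ = 0 := by rw [hfx]; simp
  · intro h0
    rw [h0, mul_zero] at hww
    exact hf0 hww.symm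
  · rw [← mul_assoc, ← mul_assoc, hpx]
  · rw [mul_assoc, hfp]
  · rw [mul_assoc, hww, mul_assoc, hff]

/-- The triples used for building 3×3 matrix units. -/
structure IsTrip (N : VonNeumannAlgebra H) (β : (H →L[ℂ] H) →ₗ[ℂ] (H →L[ℂ] H))
    (v : Fin 3 → (H →L[ℂ] H)) : Prop where
  mem : ∀ i, v i ∈ N
  same : ∀ i, v i * star (v i) = v 0
  diff : ∀ i j, i ≠ j → v i * star (v j) = 0
  beta : ∀ i, β (v i) = star (v i)

lemma exists_trip (hN : IsContinuousVNA N) (hb : IsBeta N β) (p : H →L[ℂ] H) (hpN : p ∈ N)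
    (hps : star p = p) (hpp : p * p = p) (hβp : β p = p) (hp0 : p ≠ 0) :
    ∃ u, IsTrip N β u ∧ u 0 ≠ 0 ∧ ∀ i, p * u i = u i ∧ u i * p = u i := by
  obtain ⟨w, wN, bw, ww, w0, pw, wp, www⟩ := exists_w hN hb p hpN hps hpp hβp hp0
  have wsN := star_mem wN
  have wsw : star w * w * star w = star w := by
    have := congrArg star www; simpa [mul_assoc] using this
  have wws : star w * star w = 0 := by rw [← star_mul, ww, star_zero]
  have pws : star w * p = star w := by
    have := congrArg star pw; simpa [hps] using this
  obtain ⟨z, zN, bz, zz, z0, ez, ze, zzz⟩ := exists_w hN hb (w * star w) (mul_mem wN wsN)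
    (by simp) (by rw [← mul_assoc, www])
    (by rw [hb.anti _ wN _ wsN, hb.st _ wN, bw, star_star])
    (by rw [Ne, CStarRing.mul_star_self_eq_zero_iff]; exact w0)
  have zsN := star_mem zN
  have szz : star z * z * star z = star z := by
    have := congrArg star zzz; simpa [mul_assoc] using this
  have zzs : star z * star z = 0 := by rw [← star_mul, zz, star_zero]
  have zw : z * star w = 0 := by rw [← ze, mul_assoc, mul_assoc, wws, mul_zero, mul_zero]
  have zsw : star z * star w = 0 := by
    have : star z * (w * star w) = star z := by
      have := congrArg star ez; simpa [mul_assoc] using this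
    rw [← this, mul_assoc, mul_assoc, wws, mul_zero, mul_zero]
  have pz : p * z = z := by rw [← ez, ← mul_assoc, ← mul_assoc, pw]
  have zp : z * p = z := by rw [← ze, mul_assoc, mul_assoc, pws]
  have szp : star z * p = star z := by
    have := congrArg star pz; simpa [hps] using this
  have hβe : β (z * star z) = z * star z := by
    rw [hb.anti _ zN _ zsN, hb.st _ zN, bz, star_star]
  have hE : z * star z * (w * star w) = z * star z := by
    have := congrArg star ez
    rw [mul_assoc]; congr 1
    simpa [mul_assoc] using this
  have a00 : z * star z * star (z * star z) = z * star z := by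
    rw [star_mul, star_star, ← mul_assoc, mul_assoc z, mul_assoc z, szz]
  have s0 : star (z * star z) = z * star z := by simp
  have a22 : z * star z * w * star (z * star z * w) = z * star z := by
    rw [star_mul, ← mul_assoc, mul_assoc _ w, hE, a00]
  have a01 : z * star z * star z = 0 := by rw [mul_assoc, zzs, mul_zero]
  have a02 : z * star z * star (z * star z * w) = 0 := by
    rw [star_mul, ← mul_assoc, mul_assoc z, zsw, mul_zero, zero_mul]
  have a12 : z * star (z * star z * w) = 0 := by
    rw [star_mul, ← mul_assoc, zw, zero_mul]
  have flip : ∀ a b : H →L[ℂ] H, a * star b = 0 → b * star a = 0 := fun a b h => by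
    have := congrArg star h; simpa using this
  refine ⟨![z * star z, z, z * star z * w], ⟨?_, ?_, ?_, ?_⟩, ?_, ?_⟩
  · intro i; fin_cases i
    · exact mul_mem zN zsN
    · exact zN
    · exact mul_mem (mul_mem zN zsN) wN
  · intro i; fin_cases i
    · exact a00
    · rfl
    · exact a22
  · intro i j hij; fin_cases i <;> fin_cases j
    · exact absurd rfl hij
    · exact a01
    · exact a02
    · exact flip _ _ a01
    · exact absurd rfl hij
    · exact a12
    · exact flip _ _ a02
    · exact flip _ _ a12
    · exact absurd rfl hij
  · intro i; fin_cases i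
    · show β (z * star z) = star (z * star z)
      rw [hβe, s0]
    · exact bz
    · show β (z * star z * w) = star (z * star z * w)
      rw [hb.anti _ (mul_mem zN zsN) _ wN, hβe, bw, star_mul, s0]
  · show z * star z ≠ 0
    rw [Ne, CStarRing.mul_star_self_eq_zero_iff]; exact z0
  · intro i; fin_cases i
    · show p * (z * star z) = z * star z ∧ z * star z * p = z * star z
      rw [← mul_assoc, pz, mul_assoc z _ p, szp]; exact ⟨rfl, rfl⟩
    · exact ⟨pz, zp⟩
    · show p * (z * star z * w) = z * star z * w ∧ z * star z * w * p = z * star z * w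
      rw [← mul_assoc, ← mul_assoc, pz, mul_assoc _ w p, wp]; exact ⟨rfl, rfl⟩
end vne

section vnf
variable {H : Type} [NormedAddCommGroup H] [InnerProductSpace ℂ H] [CompleteSpace H]
variable {N : VonNeumannAlgebra H} {β : (H →L[ℂ] H) →ₗ[ℂ] (H →L[ℂ] H)}

lemma exists_strong_limit {ι : Type*} [Preorder ι] [IsDirectedOrder ι] [Nonempty ι]
    (e w : ι → (H →L[ℂ] H)) (hes : ∀ a, star (e a) = e a)
    (hw : ∀ a c, a ≤ c → w c * e a = w a) (he : ∀ a c, a ≤ c → e c * e a = e a)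
    (hn : ∀ a, ‖w a‖ ≤ 1) (hen : ∀ a, ‖e a‖ ≤ 1) :
    ∃ W : H →L[ℂ] H, ∀ a, W * e a = w a := by
  have key : ∀ a c, a ≤ c → ∀ x, ‖w c x - w a x‖ ^ 2 ≤ ‖e c x‖ ^ 2 - ‖e a x‖ ^ 2 := by
    intro a c hac x
    have h1 : w c x - w a x = w c (e c x - e a x) := by
      rw [map_sub]
      have h1 := DFunLike.congr_fun (hw c c le_rfl) x
      have h2 := DFunLike.congr_fun (hw a c hac) x
      change w c (e c x) = w c x at h1
      change w c (e a x) = w a x at h2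
      rw [h1, h2]
    have h2 : ‖w c x - w a x‖ ≤ ‖e c x - e a x‖ := by
      rw [h1]
      exact (w c).le_of_opNorm_le (hn c) _ |>.trans_eq (one_mul _)
    have h3 : inner ℂ (e c x) (e a x) = inner ℂ (e a x) (e a x) := by
      have h4 : inner ℂ (e c x) (e a x) = inner ℂ x (e a x) := by
        have := adjoint_inner_right (e c) x (e a x)
        rw [← this, ← star_eq_adjoint, hes c]
        have h2 := DFunLike.congr_fun (he a c hac) x
        change e c (e a x) = e a x at h2
        rw [h2]
      have h5 : inner ℂ (e a x) (e a x) = inner ℂ x (e a x) := by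
        have := adjoint_inner_right (e a) x (e a x)
        rw [← this, ← star_eq_adjoint, hes a]
        have h2 := DFunLike.congr_fun (he a a le_rfl) x
        change e a (e a x) = e a x at h2
        rw [h2]
      rw [h4, h5]
    have h6 : ‖e c x - e a x‖ ^ 2 = ‖e c x‖ ^ 2 - ‖e a x‖ ^ 2 := by
      rw [@norm_sub_sq ℂ, h3, inner_self_eq_norm_sq]; ring
    rw [← h6]
    exact pow_le_pow_left₀ (norm_nonneg _) h2 2
  have lim : ∀ x, ∃ y, Filter.Tendsto (fun a => w a x) Filter.atTop (nhds y) := by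
    intro x
    apply cauchy_map_iff_exists_tendsto.1
    rw [Metric.cauchy_iff]
    refine ⟨inferInstance, fun ε hε => ?_⟩
    have hbd : BddAbove (Set.range fun a => ‖e a x‖ ^ 2) := by
      refine ⟨‖x‖ ^ 2, ?_⟩
      rintro _ ⟨a, rfl⟩
      exact pow_le_pow_left₀ (norm_nonneg _) ((e a).le_of_opNorm_le (hen a) x |>.trans_eq (one_mul _)) 2
    obtain ⟨a, ha⟩ := exists_lt_of_lt_ciSup (f := fun a => ‖e a x‖ ^ 2)
      (show (⨆ a, ‖e a x‖ ^ 2) - (ε / 2) ^ 2 < ⨆ a, ‖e a x‖ ^ 2 by linarith [show 0 < (ε / 2) ^ 2 by positivity])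
    have hcl : ∀ c, a ≤ c → dist (w c x) (w a x) < ε / 2 := by
      intro c hac
      have h1 := key a c hac x
      have h2 : ‖e c x‖ ^ 2 ≤ ⨆ a, ‖e a x‖ ^ 2 := le_ciSup hbd c
      rw [dist_eq_norm]
      apply lt_of_pow_lt_pow_left₀ 2 (by positivity)
      linarith
    refine ⟨(fun c => w c x) '' Set.Ici a, Filter.image_mem_map (Filter.mem_atTop a), ?_⟩
    rintro _ ⟨c, hc, rfl⟩ _ ⟨d, hd, rfl⟩
    have h1 := hcl c hc
    have h2 := hcl d hd
    have := dist_triangle_right (w c x) (w d x) (w a x)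
    show dist (w c x) (w d x) < ε
    linarith
  choose f hf using lim
  have hbdd : Bornology.IsBounded (Set.range w) := by
    rw [isBounded_iff_forall_norm_le]
    refine ⟨1, ?_⟩
    rintro _ ⟨a, rfl⟩
    exact hn a
  refine ⟨ContinuousLinearMap.ofTendstoOfBoundedRange f w (tendsto_pi_nhds.2 hf) hbdd, fun a => ?_⟩
  ext x
  show f (e a x) = w a x
  refine tendsto_nhds_unique (hf (e a x)) ?_
  apply tendsto_const_nhds.congr'
  filter_upwards [Filter.mem_atTop a] with c hc
  exact (DFunLike.congr_fun (hw a c hc) x).symm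

namespace IsTrip
variable {v : Fin 3 → (H →L[ℂ] H)}
lemma s0 (h : IsTrip N β v) : star (v 0) = v 0 := by
  have := congrArg star (h.same 0); rw [star_mul, star_star, h.same 0] at this; exact this.symm
lemma p0 (h : IsTrip N β v) : v 0 * v 0 = v 0 := by
  have := h.same 0; rwa [h.s0] at this
lemma l0 (h : IsTrip N β v) (i : Fin 3) : v 0 * v i = v i := by
  have h1 : (v i - v 0 * v i) * star (v i - v 0 * v i) = 0 := by
    have := h.same i
    have h2 := h.p0
    have h3 := h.s0
    calc (v i - v 0 * v i) * star (v i - v 0 * v i)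
        = (1 - v 0) * (v i * star (v i)) * star (1 - v 0) := by
          rw [← one_sub_mul, star_mul]; simp only [mul_assoc]
      _ = 0 := by rw [this, sub_mul, one_mul, h2, sub_self, zero_mul]
  rw [CStarRing.mul_star_self_eq_zero_iff, sub_eq_zero] at h1
  exact h1.symm
lemma n0 (h : IsTrip N β v) : ‖v 0‖ ≤ 1 := by
  have h1 := CStarRing.norm_self_mul_star (x := v 0)
  rw [h.same 0] at h1
  nlinarith [norm_nonneg (v 0)]
lemma n1 (h : IsTrip N β v) (i : Fin 3) : ‖star (v i)‖ ≤ 1 := by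
  have h1 := CStarRing.norm_self_mul_star (x := v i)
  rw [h.same i] at h1
  rw [norm_star]
  nlinarith [norm_nonneg (v i), h.n0]
end IsTrip

/-- The type of triples, ordered by restriction. -/
def Trip (N : VonNeumannAlgebra H) (β : (H →L[ℂ] H) →ₗ[ℂ] (H →L[ℂ] H)) : Type :=
  {v : Fin 3 → (H →L[ℂ] H) // IsTrip N β v}

instance : Preorder (Trip N β) where
  le v w := ∀ i, v.1 i = v.1 0 * w.1 i
  le_refl v i := (v.2.l0 i).symm
  le_trans a b c h1 h2 i := by
    rw [h1 i, h2 i, ← mul_assoc, ← h1 0]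

lemma Trip.le_def (v w : Trip N β) : v ≤ w ↔ ∀ i, v.1 i = v.1 0 * w.1 i := Iff.rfl

lemma Trip.chain_bdd (hb : IsBeta N β) (C : Set (Trip N β)) (hC : IsChain (· ≤ ·) C) :
    BddAbove C := by
  rcases C.eq_empty_or_nonempty with rfl | hne
  · refine ⟨⟨fun _ => 0, ⟨fun _ => zero_mem N, by simp, by simp, by simp⟩⟩, fun a ha => ha.elim⟩
  have : Nonempty C := hne.to_subtype
  have htot : ∀ a c : C, a ≤ c ∨ c ≤ a := fun a c => hC.total a.2 c.2
  have : IsDirectedOrder C := ⟨fun a c => (htot a c).elim (fun h => ⟨c, h, le_rfl⟩) (fun h => ⟨a, le_rfl, h⟩)⟩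
  have hle : ∀ a c : C, a ≤ c → ∀ i, a.1.1 i = a.1.1 0 * c.1.1 i := fun a c h => h
  have hT : ∀ a : C, IsTrip N β a.1.1 := fun a => a.1.2
  obtain ⟨E, hE⟩ := exists_isSupP (fun a : C => a.1.1 0)
  have hEN : E ∈ N := hE.mem N fun a => (hT a).mem 0
  have hβE : β E = E := IsSupP.beta hb hE hE (fun a => (hT a).mem 0) (fun a => (hT a).s0)
    (fun a => by rw [(hT a).beta, (hT a).s0])
  have hEe := hE.2.2.1
  have hwle : ∀ i, ∀ a c : C, a ≤ c → star (c.1.1 i) * a.1.1 0 = star (a.1.1 i) := by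
    intro i a c hac
    have := congrArg star (hle a c hac i)
    rw [star_mul, (hT a).s0] at this
    exact this.symm
  have hlim : ∀ i, ∃ W : H →L[ℂ] H, (∀ a : C, W * a.1.1 0 = star (a.1.1 i)) ∧ W * E = W := by
    intro i
    obtain ⟨W, hW⟩ := exists_strong_limit (fun a : C => a.1.1 0) (fun a : C => star (a.1.1 i))
      (fun a => (hT a).s0) (hwle i)
      (fun a c hac => by have := hwle 0 a c hac; rwa [(hT a).s0, (hT c).s0] at this)
      (fun a => (hT a).n1 i) (fun a => (hT a).n0)
    refine ⟨W * E, fun a => ?_, by rw [mul_assoc, hE.2.1]⟩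
    rw [mul_assoc, hEe, hW]
  choose W hW hWE using hlim
  have uniq : ∀ X Y, E * X = X → E * Y = Y → (∀ a : C, a.1.1 0 * X = a.1.1 0 * Y) → X = Y := by
    intro X Y hX hY h
    have h1 : star (X - Y) * E = 0 := hE.2.2.2 _ fun a => by
      have := congrArg star (h a)
      rw [star_mul, star_mul, (hT a).s0] at this
      rw [star_sub, sub_mul, this, sub_self]
    have h2 := congrArg star h1
    rw [star_mul, star_star, hE.1, mul_sub, hX, hY, star_zero, sub_eq_zero] at h2
    exact h2
  have hV : ∀ i, ∃ V : H →L[ℂ] H, V = star (W i) := fun i => ⟨_, rfl⟩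
  choose V hV using hV
  have hEV : ∀ i, E * V i = V i := fun i => by
    have := congrArg star (hWE i); rwa [star_mul, hE.1, ← hV] at this
  have heV : ∀ i (a : C), a.1.1 0 * V i = a.1.1 i := fun i a => by
    have := congrArg star (hW i a); rwa [star_mul, (hT a).s0, ← hV, star_star] at this
  have hV0 : V 0 = E := by
    apply uniq _ _ (hEV 0) hE.2.1
    intro a
    have := congrArg star (hEe a)
    rw [star_mul, (hT a).s0, hE.1] at this
    rw [heV, this]
  have hVN : ∀ i, V i ∈ N := by
    intro i
    apply mem_of_comm
    intro y hy
    apply uniq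
    · rw [← mul_assoc, hy E hEN, mul_assoc, hEV]
    · rw [← mul_assoc, hEV]
    · intro a
      rw [← mul_assoc, hy _ ((hT a).mem 0), mul_assoc, heV, ← mul_assoc, heV, hy _ ((hT a).mem i)]
  have prod : ∀ i j (D : (H →L[ℂ] H) → (H →L[ℂ] H)), (∀ x y, D (x * y) = x * D y) →
      (∀ x, star (D x) = D (star x)) →
      (∀ a : C, a.1.1 j * star (a.1.1 i) = D (a.1.1 0)) → (∀ x y, D (x * y) = D x * y) →
      V i * star (V j) = D E := by
    intro i j D hD hDs hij hD'
    have s1 : ∀ a : C, V j * star (a.1.1 i) = D (a.1.1 0) := by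
      intro a
      apply uniq
      · rw [← mul_assoc, hEV]
      · rw [← hD, hEe]
      · intro c
        rw [← mul_assoc, heV]
        rcases htot a c with h | h
        · rw [hle a c h i, star_mul, (hT a).s0, ← mul_assoc, hij c, ← hD', ← hD]
        · rw [hle c a h j, mul_assoc, hij a, ← hD]
    apply uniq
    · rw [← mul_assoc, hEV]
    · rw [← hD, hE.2.1]
    · intro a
      have := congrArg star (s1 a)
      rw [star_mul, star_star, hDs, (hT a).s0] at this
      rw [← mul_assoc, heV, this, ← hD]
      have := congrArg star (hEe a)
      rw [star_mul, (hT a).s0, hE.1] at this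
      rw [this]
  refine ⟨⟨V, ⟨hVN, ?_, ?_, ?_⟩⟩, ?_⟩
  · intro i
    rw [hV0]
    exact prod i i id (fun _ _ => rfl) (fun _ => rfl) (fun a => (hT a).same i) (fun _ _ => rfl)
  · intro i j hij
    exact prod i j (fun _ => 0) (by simp) (by simp) (fun a => (hT a).diff j i hij.symm) (by simp)
  · intro i
    have h1 : (β (V i) - star (V i)) * E = 0 := hE.2.2.2 _ fun a => by
      have h2 := hb.anti _ ((hT a).mem 0) _ (hVN i)
      rw [heV, (hT a).beta, (hT a).beta, (hT a).s0] at h2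
      rw [sub_mul, ← h2, hV, star_star, hW, sub_self]
    have h3 : β (V i) * E = β (V i) := by
      have := hb.anti _ hEN _ (hVN i)
      rw [hEV, hβE] at this; exact this.symm
    rw [sub_mul, h3, hV, star_star, hWE, sub_eq_zero] at h1
    rw [hV, star_star, h1]
  · intro a ha i
    exact (heV i ⟨a, ha⟩).symm

lemma exists_units (hN : IsContinuousVNA N) (hb : IsBeta N β) :
    ∃ e : Fin 3 → Fin 3 → (H →L[ℂ] H), (∀ i j, e i j ∈ N) ∧ (∀ i j k, e i j * e j k = e i k) ∧
      (∀ i j k l, j ≠ k → e i j * e k l = 0) ∧ ∑ i, e i i = 1 ∧ ∀ i j, β (e i j) = e j i := by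
  obtain ⟨v, hmax⟩ := zorn_le (α := Trip N β) (Trip.chain_bdd hb)
  obtain ⟨v, hv⟩ := v
  have vs : ∀ i, star (v i) * v 0 = star (v i) := fun i => by
    have := congrArg star (hv.l0 i); rwa [star_mul, hv.s0] at this
  have hm : ∀ i, v i ∈ N := hv.mem
  have hms : ∀ i, star (v i) ∈ N := fun i => star_mem (hm i)
  have m1 : ∀ i j k, star (v i) * v j * (star (v j) * v k) = star (v i) * v k := fun i j k => by
    rw [mul_assoc, ← mul_assoc (v j), hv.same, hv.l0]
  have m2 : ∀ i j k l, j ≠ k → star (v i) * v j * (star (v k) * v l) = 0 := fun i j k l h => by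
    rw [mul_assoc, ← mul_assoc (v j), hv.diff _ _ h, zero_mul, mul_zero]
  have m3 : ∀ i j, β (star (v i) * v j) = star (v j) * v i := fun i j => by
    rw [hb.anti _ (hms i) _ (hm j), hb.st _ (hm i), hv.beta, hv.beta, star_star]
  refine ⟨fun i j => star (v i) * v j, fun i j => mul_mem (hms i) (hm j), m1, m2, ?_, m3⟩
  obtain ⟨g, hg⟩ : ∃ g, g = ∑ i, star (v i) * v i := ⟨_, rfl⟩
  rw [← hg]
  by_contra hne
  have gN : g ∈ N := hg ▸ sum_mem fun i _ => mul_mem (hms i) (hm i)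
  have gs : star g = g := by rw [hg, star_sum]; simp
  have gβ : β g = g := by rw [hg, map_sum]; simp only [m3]
  have gv : ∀ i, v i * g = v i := by
    intro i
    rw [hg, Finset.mul_sum, Finset.sum_eq_single i]
    · rw [← mul_assoc, hv.same, hv.l0]
    · intro j _ hj
      rw [← mul_assoc, hv.diff _ _ hj.symm, zero_mul]
    · simp
  have gg : g * g = g := by
    nth_rewrite 1 [hg]
    rw [Finset.sum_mul]
    simp only [mul_assoc, gv]
    exact hg.symm
  obtain ⟨r, hr⟩ : ∃ r, r = 1 - g := ⟨_, rfl⟩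
  have vr : ∀ i, v i * r = 0 := fun i => by rw [hr, mul_sub, mul_one, gv, sub_self]
  have rs : star r = r := by rw [hr, star_sub, star_one, gs]
  have rv : ∀ i, r * star (v i) = 0 := fun i => by
    have := congrArg star (vr i); rwa [star_mul, rs, star_zero] at this
  obtain ⟨u, hu, hu0, hur⟩ := exists_trip hN hb r (hr ▸ sub_mem (one_mem N) gN) rs
    (by rw [hr, mul_sub, mul_one, sub_mul, one_mul, gg, sub_self, sub_zero])
    (by rw [hr, map_sub, beta_one hb, gβ])
    (by rw [hr, Ne, sub_eq_zero]; exact fun h => hne h.symm)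
  have uv : ∀ i j, u i * star (v j) = 0 := fun i j => by
    rw [← (hur i).2, mul_assoc, rv, mul_zero]
  have vu : ∀ i j, v i * star (u j) = 0 := fun i j => by
    have := congrArg star (uv j i); rwa [star_mul, star_star, star_zero] at this
  have v0u : ∀ i, v 0 * u i = 0 := fun i => by rw [← (hur i).1, ← mul_assoc, vr, zero_mul]
  have hvu : IsTrip N β (fun i => v i + u i) := by
    refine ⟨fun i => add_mem (hm i) (hu.mem i), fun i => ?_, fun i j hij => ?_, fun i => ?_⟩
    · rw [star_add, mul_add, add_mul, add_mul, uv, vu, hv.same, hu.same, add_zero, zero_add]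
    · rw [star_add, mul_add, add_mul, add_mul, uv, vu, hv.diff _ _ hij, hu.diff _ _ hij]; simp
    · rw [map_add, star_add, hv.beta, hu.beta]
  have h1 := hmax (b := ⟨_, hvu⟩) (fun i => by
    show v i = v 0 * (v i + u i)
    rw [mul_add, hv.l0, v0u, add_zero])
  have h2 : v 0 + u 0 = (v 0 + u 0) * v 0 := h1 0
  have h3 := uv 0 0
  rw [hv.s0] at h3
  rw [add_mul, hv.p0, h3, add_zero] at h2
  exact hu0 (by simpa using h2)
end vnf

section fin
variable {H : Type} [NormedAddCommGroup H] [InnerProductSpace ℂ H] [CompleteSpace H]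

/-- `β` as a linear map of the star subalgebra `N`. -/
noncomputable def betaRes (N : VonNeumannAlgebra H) (β : (H →L[ℂ] H) →ₗ[ℂ] (H →L[ℂ] H))
    (h : ∀ x ∈ N, β x ∈ N) : ↥N.toStarSubalgebra →ₗ[ℂ] ↥N.toStarSubalgebra where
  toFun x := ⟨β x.1, h x.1 x.2⟩
  map_add' x y := Subtype.ext (map_add β x.1 y.1)
  map_smul' r x := Subtype.ext (map_smul β r x.1)

/-- The symmetrization `x ↦ (x + β x) / 2`. -/
noncomputable def symRes (N : VonNeumannAlgebra H) (β : (H →L[ℂ] H) →ₗ[ℂ] (H →L[ℂ] H))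
    (h : IsBeta N β) : ↥N.toStarSubalgebra →ₗ[ℂ] ↥(hermPart N β) where
  toFun x := ⟨(2 : ℂ)⁻¹ • (x.1 + β x.1), smul_mem' N _ _ (add_mem x.2 (h.mem _ x.2)), by
    show β _ = _
    rw [map_smul, map_add, h.sq _ x.2, add_comm]; rfl⟩
  map_add' x y := Subtype.ext (by
    show (2 : ℂ)⁻¹ • (x.1 + y.1 + β (x.1 + y.1)) = (2 : ℂ)⁻¹ • (x.1 + β x.1) + (2 : ℂ)⁻¹ • (y.1 + β y.1)
    rw [map_add]; module)
  map_smul' r x := Subtype.ext (by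
    show (2 : ℂ)⁻¹ • (r • x.1 + β (r • x.1)) = r • (2 : ℂ)⁻¹ • (x.1 + β x.1)
    rw [map_smul]; module)

lemma tro_part {K L : Type} [NormedAddCommGroup K] [InnerProductSpace ℂ K] [CompleteSpace K]
    [NormedAddCommGroup L] [InnerProductSpace ℂ L] [CompleteSpace L]
    (u y : K →L[ℂ] L) (hu : jtri u u u = u) (hy : jtri u u y = y) :
    u ∘L (adjoint u) ∘L y = y ∧ y ∘L (adjoint u) ∘L u = y := by
  have huu : u ∘L (adjoint u) ∘L u = u := by
    rw [jtri, ← two_smul ℂ, smul_smul, inv_mul_cancel₀ two_ne_zero, one_smul] at hu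
    exact hu
  have h2 : u ∘L (adjoint u) ∘L y + y ∘L (adjoint u) ∘L u = (2 : ℂ) • y := by
    nth_rewrite 3 [← hy]
    rw [jtri, smul_smul, mul_inv_cancel₀ two_ne_zero, one_smul]; rfl
  have e1 : u ∘L (adjoint u) ∘L y = u ∘L (adjoint u) ∘L y ∘L (adjoint u) ∘L u := by
    have h3 := congrArg (fun t => u ∘L (adjoint u) ∘L t) h2
    simp only [comp_add, comp_smul] at h3
    have h4 : u ∘L (adjoint u) ∘L u ∘L (adjoint u) ∘L y = u ∘L (adjoint u) ∘L y :=
      congrArg (fun t => t ∘L (adjoint u) ∘L y) huu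
    rw [h4, two_smul] at h3
    exact (add_left_cancel h3).symm
  have e2 : y ∘L (adjoint u) ∘L u = u ∘L (adjoint u) ∘L y ∘L (adjoint u) ∘L u := by
    have h3 := congrArg (fun t => t ∘L (adjoint u) ∘L u) h2
    simp only [add_comp, smul_comp] at h3
    have h4 : (y ∘L (adjoint u) ∘L u) ∘L (adjoint u) ∘L u = y ∘L (adjoint u) ∘L u :=
      congrArg (fun t => y ∘L (adjoint u) ∘L t) huu
    rw [h4, two_smul] at h3
    exact (add_right_cancel h3).symm
  rw [← e1] at e2
  rw [e2, ← two_smul ℂ] at h2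
  have := smul_right_injective _ (two_ne_zero (α := ℂ)) h2
  exact ⟨this, e2.trans this⟩
end fin

/-- for a continuous von Neumann algebra `N` with a *-antiautomorphism `β` of
order 2, `N` regarded as a TRO, together with the inclusion map `H(N,β) ↪ N`, is a universal
enveloping TRO of the JC*-triple `H(N,β)`: `H(N,β)` generates `N` as a TRO, and every triple
homomorphism from `H(N,β)` into a TRO `S` extends to a TRO homomorphism `N → S`;
that is, `T*(H(N,β)) = N`. -/
theorem universal_tro_of_hermitian_part
    (N : VonNeumannAlgebra H) (hN : IsContinuousVNA N)
    (β : (H →L[ℂ] H) →ₗ[ℂ] (H →L[ℂ] H))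
    (hβmem : ∀ x ∈ N, β x ∈ N)
    (hβanti : ∀ x ∈ N, ∀ y ∈ N, β (x * y) = β y * β x)
    (hβstar : ∀ x ∈ N, β (star x) = star (β x))
    (hβsq : ∀ x ∈ N, β (β x) = x) :
    -- `H(N,β)` generates `N` as a TRO:
    (∀ T : Submodule ℂ (H →L[ℂ] H), IsTRO T → hermPart N β ≤ T → vnSubmodule N ≤ T) ∧
    -- every triple homomorphism from `H(N,β)` into a TRO extends to a TRO homomorphism on `N`:
    (∀ (K' H' : Type) [NormedAddCommGroup K'] [InnerProductSpace ℂ K'] [CompleteSpace K']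
      [NormedAddCommGroup H'] [InnerProductSpace ℂ H'] [CompleteSpace H'],
      ∀ S : Submodule ℂ (K' →L[ℂ] H'), IsTRO S →
      ∀ π : ↥(hermPart N β) →ₗ[ℂ] (K' →L[ℂ] H'),
        (∀ x, π x ∈ S) →
        (∀ (x y z : ↥(hermPart N β))
          (h : jtri (x : H →L[ℂ] H) y z ∈ hermPart N β),
          π ⟨jtri (x : H →L[ℂ] H) y z, h⟩ = jtri (π x) (π y) (π z)) →
        ∃ πt : ↥(vnSubmodule N) →ₗ[ℂ] (K' →L[ℂ] H'),
          (∀ a, πt a ∈ S) ∧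
          (∀ (a b c : ↥(vnSubmodule N)) (h : tri (a : H →L[ℂ] H) b c ∈ vnSubmodule N),
            πt ⟨tri (a : H →L[ℂ] H) b c, h⟩ = tri (πt a) (πt b) (πt c)) ∧
          (∀ (x : ↥(hermPart N β)) (hx : (x : H →L[ℂ] H) ∈ vnSubmodule N),
            πt ⟨(x : H →L[ℂ] H), hx⟩ = π x)) := by
  have hb : IsBeta N β := ⟨hβmem, hβanti, hβstar, hβsq⟩
  obtain ⟨e, heN, hmul, hmul0, hsum, he⟩ := exists_units hN hb
  let bA := betaRes N β hβmem
  let eA : Fin 3 → Fin 3 → ↥N.toStarSubalgebra := fun i j => ⟨e i j, heN i j⟩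
  have A1 : ∀ x y, bA (x * y) = bA y * bA x := fun x y => Subtype.ext (hβanti _ x.2 _ y.2)
  have A2 : ∀ x, bA (bA x) = x := fun x => Subtype.ext (hβsq _ x.2)
  have A3 : ∀ i j k, eA i j * eA j k = eA i k := fun i j k => Subtype.ext (hmul i j k)
  have A4 : ∀ i j k l, j ≠ k → eA i j * eA k l = 0 := fun i j k l h => Subtype.ext (hmul0 i j k l h)
  have A5 : ∑ i, eA i i = 1 := Subtype.ext (by
    rw [← N.toStarSubalgebra.coe_subtype, map_sum]; exact hsum)
  have A6 : ∀ i j, bA (eA i j) = eA j i := fun i j => Subtype.ext (he i j)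
  have gen := gen_lemma bA A1 A2 eA A3 A4 A5 A6
  have hmemJ : ∀ x : ↥N.toStarSubalgebra, bA x = x → x.1 ∈ hermPart N β := fun x hx =>
    ⟨x.2, congrArg Subtype.val hx⟩
  have h1J : (1 : H →L[ℂ] H) ∈ hermPart N β := ⟨one_mem N, beta_one hb⟩
  refine ⟨?_, ?_⟩
  · intro T hT hJT x hx
    have := gen (T.comap N.toStarSubalgebra.toSubalgebra.val.toLinearMap)
      (fun x hx => hJT (hmemJ x hx)) (fun x hx y hy => by
        have := hT.2 x.1 hx 1 (hJT h1J) y.1 hy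
        have e : tri x.1 1 y.1 = x.1 * y.1 := by
          rw [tri, ← star_eq_adjoint, star_one]; rfl
        rwa [e] at this) ⟨x, hx⟩
    exact this
  · intro K' H' _ _ _ _ _ _ S hS π hπS hπ
    obtain ⟨u, hu⟩ : ∃ u, u = π ⟨1, h1J⟩ := ⟨_, rfl⟩
    have tr1 : ∀ x y : H →L[ℂ] H, tri x 1 y = x * y := fun x y => by
      rw [tri, ← star_eq_adjoint, star_one]; rfl
    have hpar : ∀ x : ↥(hermPart N β), u ∘L (adjoint u) ∘L π x = π x ∧ π x ∘L (adjoint u) ∘L u = π x := by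
      have hh : ∀ x : ↥(hermPart N β), jtri u u (π x) = π x := by
        intro x
        have h1 : jtri (1 : H →L[ℂ] H) 1 x.1 = x.1 := by
          rw [jtri, tr1, tr1, one_mul, mul_one, ← two_smul ℂ, smul_smul,
            inv_mul_cancel₀ two_ne_zero, one_smul]
        have h2 := hπ ⟨1, h1J⟩ ⟨1, h1J⟩ x (h1.symm ▸ x.2)
        rw [← hu] at h2
        rw [← h2]
        exact congrArg π (Subtype.ext h1)
      intro x
      exact tro_part u (π x) (by have := hh ⟨1, h1J⟩; rwa [← hu] at this) (hh x)
    have hj : ∀ x y z : K' →L[ℂ] H', jtri x y z = (2 : ℂ)⁻¹ • (tri x y z + tri z y x) := fun _ _ _ => rfl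
    let ρ : ↥N.toStarSubalgebra →ₗ[ℂ] (K' →L[ℂ] K') :=
      { toFun := fun x => adjoint u ∘L π (symRes N β hb x)
        map_add' := fun x y => by rw [map_add, map_add, comp_add]
        map_smul' := fun r x => by rw [map_smul, map_smul, comp_smul]; rfl }
    have hsym : ∀ x : ↥N.toStarSubalgebra, ∀ hx : bA x = x, symRes N β hb x = ⟨x.1, hmemJ x hx⟩ := by
      intro x hx
      apply Subtype.ext
      show (2 : ℂ)⁻¹ • (x.1 + β x.1) = x.1
      have : β x.1 = x.1 := congrArg Subtype.val hx
      rw [this, ← two_smul ℂ, smul_smul, inv_mul_cancel₀ two_ne_zero, one_smul]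
    have hρJ : ∀ x : ↥N.toStarSubalgebra, ∀ hx : bA x = x, ρ x = adjoint u ∘L π ⟨x.1, hmemJ x hx⟩ := by
      intro x hx
      show adjoint u ∘L π (symRes N β hb x) = _
      rw [hsym x hx]
    have hρ : ∀ x y, bA x = x → bA y = y → ρ (x * y + y * x) = ρ x * ρ y + ρ y * ρ x := by
      intro x y hx hy
      have hxy : bA (x * y + y * x) = x * y + y * x := by
        rw [map_add, A1, A1, hx, hy, add_comm]
      rw [hρJ x hx, hρJ y hy, hρJ _ hxy]
      have h1 : jtri x.1 1 y.1 = (2 : ℂ)⁻¹ • (x * y + y * x : ↥N.toStarSubalgebra).1 := by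
        rw [jtri, tr1, tr1]; rfl
      have h2 := hπ ⟨x.1, hmemJ x hx⟩ ⟨1, h1J⟩ ⟨y.1, hmemJ y hy⟩
        (h1.symm ▸ Submodule.smul_mem _ _ (hmemJ _ hxy))
      have h3 : π ⟨(x * y + y * x : ↥N.toStarSubalgebra).1, hmemJ _ hxy⟩ =
          tri (π ⟨x.1, hmemJ x hx⟩) u (π ⟨y.1, hmemJ y hy⟩) +
          tri (π ⟨y.1, hmemJ y hy⟩) u (π ⟨x.1, hmemJ x hx⟩) := by
        rw [← hu, hj] at h2
        refine smul_right_injective _ (inv_ne_zero (two_ne_zero (α := ℂ))) ?_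
        refine Eq.trans ?_ h2
        refine (map_smul π _ _).symm.trans ?_
        exact congrArg π (Subtype.ext h1.symm)
      rw [h3, comp_add]; rfl
    obtain ⟨Φ, hΦ, hΦJ⟩ := ext_lemma bA A1 A2 eA A3 A4 A5 A6 ρ hρ
    have hΦJ' : ∀ x : ↥N.toStarSubalgebra, ∀ hx : bA x = x, Φ x = adjoint u ∘L π ⟨x.1, hmemJ x hx⟩ :=
      fun x hx => (hΦJ x hx).trans (hρJ x hx)
    have hb1 : bA 1 = 1 := Subtype.ext (beta_one hb)
    have hΦ1 : Φ 1 = adjoint u ∘L u := by rw [hΦJ' 1 hb1, hu]; rfl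
    have hF : ∀ a, adjoint u ∘L u ∘L Φ a = Φ a := by
      intro a
      have := hΦ 1 a
      rw [one_mul, hΦ1] at this
      exact this.symm
    have hst : ∀ a, Φ (star a) = adjoint (Φ a) := by
      intro a
      refine gen { carrier := {a | Φ (star a) = adjoint (Φ a)}, add_mem' := ?_, zero_mem' := ?_, smul_mem' := ?_ } ?_ ?_ a
      · intro a b ha hb
        show Φ (star (a + b)) = adjoint (Φ (a + b))
        rw [star_add, map_add, map_add, map_add]
        exact congrArg₂ _ ha hb
      · show Φ (star 0) = adjoint (Φ 0)
        rw [star_zero, map_zero, map_zero]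
      · intro r a ha
        show Φ (star (r • a)) = adjoint (Φ (r • a))
        rw [star_smul, map_smul, map_smul, map_smulₛₗ]
        exact congrArg _ ha
      · intro x hx
        show Φ (star x) = adjoint (Φ x)
        have hxs : bA (star x) = star x := Subtype.ext (by
          have : β x.1 = x.1 := congrArg Subtype.val hx
          show β (star x.1) = star x.1
          rw [hβstar _ x.2, this])
        have h1 : jtri (1 : H →L[ℂ] H) x.1 1 = star x.1 := by
          rw [jtri, ← two_smul ℂ, smul_smul, inv_mul_cancel₀ two_ne_zero, one_smul]; rfl
        have h2 := hπ ⟨1, h1J⟩ ⟨x.1, hmemJ x hx⟩ ⟨1, h1J⟩ (h1.symm ▸ hmemJ _ hxs)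
        have h3 : π ⟨(star x : ↥N.toStarSubalgebra).1, hmemJ _ hxs⟩ = tri u (π ⟨x.1, hmemJ x hx⟩) u := by
          rw [← hu, hj, ← two_smul ℂ, smul_smul, inv_mul_cancel₀ two_ne_zero, one_smul] at h2
          refine Eq.trans ?_ h2
          exact congrArg π (Subtype.ext h1.symm)
        rw [hΦJ' x hx, hΦJ' _ hxs, h3, tri, adjoint_comp, adjoint_adjoint]
        have h4 := congrArg adjoint (hpar ⟨x.1, hmemJ x hx⟩).2
        rw [adjoint_comp, adjoint_comp, adjoint_adjoint] at h4
        conv_rhs => rw [← h4]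
        rfl
      · intro x hx y hy
        show Φ (star (x * y)) = adjoint (Φ (x * y))
        rw [star_mul, hΦ, hΦ, mul_def, mul_def, adjoint_comp]
        exact congrArg₂ _ hy hx
    have huS : u ∈ S := hu ▸ hπS _
    have hres : ∀ x : ↥N.toStarSubalgebra, ∀ hx : bA x = x, u ∘L Φ x = π ⟨x.1, hmemJ x hx⟩ := by
      intro x hx
      rw [hΦJ' x hx]; exact (hpar _).1
    let πt : ↥N.toStarSubalgebra →ₗ[ℂ] (K' →L[ℂ] H') :=
      { toFun := fun x => u ∘L Φ x
        map_add' := fun x y => by rw [map_add, comp_add]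
        map_smul' := fun r x => by rw [map_smul, comp_smul]; rfl }
    refine ⟨πt, ?_, ?_, ?_⟩
    · intro a
      refine gen (S.comap πt) ?_ ?_ a
      · intro x hx
        show u ∘L Φ x ∈ S
        rw [hres x hx]; exact hπS _
      · intro x hx y hy
        show u ∘L Φ (x * y) ∈ S
        have := hS.2 _ hx _ huS _ hy
        have e : tri (πt x) u (πt y) = u ∘L Φ (x * y) := by
          rw [hΦ]
          show u ∘L Φ x ∘L (adjoint u ∘L u ∘L Φ y) = _
          rw [hF]; rfl
        rwa [e] at this
    · intro a b c h
      let a' : ↥N.toStarSubalgebra := a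
      let b' : ↥N.toStarSubalgebra := b
      let c' : ↥N.toStarSubalgebra := c
      show u ∘L Φ (a' * (star b' * c')) = tri (u ∘L Φ a') (u ∘L Φ b') (u ∘L Φ c')
      rw [hΦ, hΦ, hst, tri, adjoint_comp]
      show _ = u ∘L Φ a' ∘L adjoint (Φ b') ∘L (adjoint u ∘L u ∘L Φ c')
      rw [hF]; rfl
    · intro x hx
      exact hres ⟨x.1, hx⟩ (Subtype.ext x.2.2)
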